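/- For every graph G in Cact(n;t) with n ≥ 25 and t ≥ 1 that is not isomorphic to G⁰(n,t) and not isomorphic to G5, it holds that D_R(G) ≥ −(4/3)t² + ((4/3)n − 10/3)t + 3n² − (13/3)n − 8, with equality if and only if G is isomorphic to G4. -/

import Mathlib

open Finset

/-- Effective resistance between two vertices of a graph (for a connected graph
this is the effective resistance when every edge is a unit resistor), defined via
the matrix-tree / spanning-two-forest determinant formula. -/
noncomputable def effRes {V : Type*} [Finite V] (G : SimpleGraph V) (u v : V) : ℝ :=
  letI := Fintype.ofFinite V
  letI := Classical.decEq V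
  letI : DecidableRel G.Adj := Classical.decRel _
  if u = v then 0
  else
    Matrix.det ((G.lapMatrix ℝ).submatrix
        (fun w : {w : V // w ≠ u ∧ w ≠ v} => (w : V)) (fun w => (w : V)))
      / Matrix.det ((G.lapMatrix ℝ).submatrix
        (fun w : {w : V // w ≠ u} => (w : V)) (fun w => (w : V)))

/-- The degree resistance distance `D_R(G) = Σ_{ {u,v} ⊆ V } (d(u)+d(v)) R(u,v)`. -/
noncomputable def degRes {V : Type*} [Finite V] (G : SimpleGraph V) : ℝ :=
  letI := Fintype.ofFinite V
  letI := Classical.decEq V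
  letI : DecidableRel G.Adj := Classical.decRel _
  (1 / 2) * ∑ u : V, ∑ v : V, ((G.degree u : ℝ) + (G.degree v : ℝ)) * effRes G u v

/-- The Kirchhoff index `Kf(G) = Σ_{ {u,v} ⊆ V } R(u,v)`. -/
noncomputable def kirchhoffIndex {V : Type*} [Finite V] (G : SimpleGraph V) : ℝ :=
  letI := Fintype.ofFinite V
  (1 / 2) * ∑ u : V, ∑ v : V, effRes G u v

/-- `Kf_v(G) = Σ_{u ∈ V} R(u,v)`. -/
noncomputable def Kfv {V : Type*} [Finite V] (G : SimpleGraph V) (v : V) : ℝ :=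
  letI := Fintype.ofFinite V
  ∑ u : V, effRes G u v

/-- `D_v(G) = Σ_{u ∈ V} d(u) R(u,v)`. -/
noncomputable def Dv {V : Type*} [Finite V] (G : SimpleGraph V) (v : V) : ℝ :=
  letI := Fintype.ofFinite V
  letI := Classical.decEq V
  letI : DecidableRel G.Adj := Classical.decRel _
  ∑ u : V, (G.degree u : ℝ) * effRes G u v

/-- A subgraph is a cycle if it is connected and `2`-regular. -/
def IsCycleSubgraph {V : Type*} {G : SimpleGraph V} (H : G.Subgraph) : Prop :=
  H.coe.Connected ∧ ∀ v ∈ H.verts, {u | H.Adj v u}.ncard = 2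

/-- A cactus is a connected graph in which any two distinct cycles share at most
one vertex (equivalently, every block is an edge or a cycle). -/
def IsCactus {V : Type*} (G : SimpleGraph V) : Prop :=
  G.Connected ∧ ∀ H₁ H₂ : G.Subgraph, IsCycleSubgraph H₁ → IsCycleSubgraph H₂ →
    H₁ ≠ H₂ → (H₁.verts ∩ H₂.verts).ncard ≤ 1

/-- The number of cycles of a graph. -/
noncomputable def numCycles {V : Type*} (G : SimpleGraph V) : ℕ :=
  {H : G.Subgraph | IsCycleSubgraph H}.ncard

/-- `G ∈ Cact(n;t)`: `G` is a cactus with `n` vertices and `t` cycles. -/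
def MemCact {V : Type*} (n t : ℕ) (G : SimpleGraph V) : Prop :=
  IsCactus G ∧ Nat.card V = n ∧ numCycles G = t

/-- `G⁰(n,t)`: `t` triangles (on vertices `2i+1, 2i+2`, `i < t`) and `n - 2t - 1`
pendent edges, all sharing the common vertex `0`. -/
def G0 (n t : ℕ) : SimpleGraph (Fin n) :=
  SimpleGraph.fromRel (fun a b =>
    a.val = 0 ∨ (Odd a.val ∧ b.val = a.val + 1 ∧ b.val ≤ 2 * t))

/-- `G3`: `t` triangles, `n - 2t - 3` pendent edges, and one pendent path of
length 2 (through `2t+1` to `2t+2`), all attached at the common vertex `0`. -/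
def G3g (n t : ℕ) : SimpleGraph (Fin n) :=
  SimpleGraph.fromRel (fun a b =>
    (a.val = 0 ∧ b.val ≠ 2 * t + 2) ∨
    (Odd a.val ∧ b.val = a.val + 1 ∧ b.val ≤ 2 * t) ∨
    (a.val = 2 * t + 1 ∧ b.val = 2 * t + 2))

/-- `G4`: `t` triangles and `n - 2t - 2` pendent edges at the common vertex `0`,
together with one pendent edge (to `2t+1`) attached at the triangle vertex `1`. -/
def G4g (n t : ℕ) : SimpleGraph (Fin n) :=
  SimpleGraph.fromRel (fun a b =>
    (a.val = 0 ∧ b.val ≠ 2 * t + 1) ∨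
    (Odd a.val ∧ b.val = a.val + 1 ∧ b.val ≤ 2 * t) ∨
    (a.val = 1 ∧ b.val = 2 * t + 1))

/-- `G5`: `t - 1` triangles, one quadrilateral `C₄` (on `0, 2t-1, 2t, 2t+1`), and
`n - 2t - 2` pendent edges, all sharing the common vertex `0`. -/
def G5g (n t : ℕ) : SimpleGraph (Fin n) :=
  SimpleGraph.fromRel (fun a b =>
    (a.val = 0 ∧ b.val ≠ 2 * t) ∨
    (Odd a.val ∧ b.val = a.val + 1 ∧ b.val ≤ 2 * t - 2) ∨
    (a.val = 2 * t - 1 ∧ b.val = 2 * t) ∨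
    (a.val = 2 * t ∧ b.val = 2 * t + 1))

/-- `G6`: `t - 1` triangles, one quadrilateral `C₄` (on `0, 2t-1, 2t, 2t+1`), and
`n - 2t - 3` pendent edges at the common vertex `0`, together with one pendent edge
(to `2t+2`) attached at the quadrilateral vertex `2t-1`, which is adjacent to `0`. -/
def G6g (n t : ℕ) : SimpleGraph (Fin n) :=
  SimpleGraph.fromRel (fun a b =>
    (a.val = 0 ∧ b.val ≠ 2 * t ∧ b.val ≠ 2 * t + 2) ∨
    (Odd a.val ∧ b.val = a.val + 1 ∧ b.val ≤ 2 * t - 2) ∨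
    (a.val = 2 * t - 1 ∧ (b.val = 2 * t ∨ b.val = 2 * t + 2)) ∨
    (a.val = 2 * t ∧ b.val = 2 * t + 1))

/-- `G7`: `t - 1` triangles, one quadrilateral `C₄` (on `0, 2t-1, 2t, 2t+1`), and
`n - 2t - 3` pendent edges at the common vertex `0`, together with one pendent edge
(to `2t+2`) attached at the quadrilateral vertex `2t`, which is opposite to `0`. -/
def G7g (n t : ℕ) : SimpleGraph (Fin n) :=
  SimpleGraph.fromRel (fun a b =>
    (a.val = 0 ∧ b.val ≠ 2 * t ∧ b.val ≠ 2 * t + 2) ∨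
    (Odd a.val ∧ b.val = a.val + 1 ∧ b.val ≤ 2 * t - 2) ∨
    (a.val = 2 * t - 1 ∧ b.val = 2 * t) ∨
    (a.val = 2 * t ∧ (b.val = 2 * t + 1 ∨ b.val = 2 * t + 2)))

/-- `G8`: `t - 2` triangles, two quadrilaterals `C₄` (on `0, 2t-3, 2t-2, 2t-1` and
on `0, 2t, 2t+1, 2t+2`), and `n - 2t - 3` pendent edges, all sharing the common
vertex `0`. -/
def G8g (n t : ℕ) : SimpleGraph (Fin n) :=
  SimpleGraph.fromRel (fun a b =>
    (a.val = 0 ∧ b.val ≠ 2 * t - 2 ∧ b.val ≠ 2 * t + 1) ∨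
    (Odd a.val ∧ b.val = a.val + 1 ∧ b.val ≤ 2 * t - 4) ∨
    (a.val = 2 * t - 3 ∧ b.val = 2 * t - 2) ∨
    (a.val = 2 * t - 2 ∧ b.val = 2 * t - 1) ∨
    (a.val = 2 * t ∧ b.val = 2 * t + 1) ∨
    (a.val = 2 * t + 1 ∧ b.val = 2 * t + 2))

/-- `G9`: `t - 1` triangles, one quadrilateral `C₄` (on `0, 2t-1, 2t, 2t+1`), and
`n - 2t - 3` pendent edges at the common vertex `0`, together with one pendent edge
(to `2t+2`) attached at the non-central triangle vertex `1`. -/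
def G9g (n t : ℕ) : SimpleGraph (Fin n) :=
  SimpleGraph.fromRel (fun a b =>
    (a.val = 0 ∧ b.val ≠ 2 * t ∧ b.val ≠ 2 * t + 2) ∨
    (Odd a.val ∧ b.val = a.val + 1 ∧ b.val ≤ 2 * t - 2) ∨
    (a.val = 2 * t - 1 ∧ b.val = 2 * t) ∨
    (a.val = 2 * t ∧ b.val = 2 * t + 1) ∨
    (a.val = 1 ∧ b.val = 2 * t + 2))

/-- `G10`: `t - 1` triangles, one pentagon `C₅` (on `0, 2t-1, 2t, 2t+1, 2t+2`), and
`n - 2t - 3` pendent edges, all sharing the common vertex `0`. -/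
def G10g (n t : ℕ) : SimpleGraph (Fin n) :=
  SimpleGraph.fromRel (fun a b =>
    (a.val = 0 ∧ b.val ≠ 2 * t ∧ b.val ≠ 2 * t + 1) ∨
    (Odd a.val ∧ b.val = a.val + 1 ∧ b.val ≤ 2 * t - 2) ∨
    (a.val = 2 * t - 1 ∧ b.val = 2 * t) ∨
    (a.val = 2 * t ∧ b.val = 2 * t + 1) ∨
    (a.val = 2 * t + 1 ∧ b.val = 2 * t + 2))

/-!
Each block of a cactus, an edge counting as a cycle of length two, projects the vertex set onto its
cycle, and the resistance distance is the sum over the blocks of the resistances between the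
projections. Hence `D_R(G)` is a sum of contributions of the blocks. From the contribution of a
block of length `k` subtract the price of `k - 1` pendent edges, and a correction if `k ≠ 2`; since
the blocks satisfy `∑ (k - 1) = n - 1` and `t` of them are cycles, the subtracted total depends only
on `n` and `t`, and it remains to compare the sums of the excesses. The excess of a block is
nonnegative. It vanishes if the block is an edge or a triangle with a single nontrivial branch, so
these blocks alone produce `G⁰`. It equals `(8n - 36 + 4t) / 3` for a triangle whose branches are a
pendent edge, a single vertex and the rest of the graph, as in `G4`; it exceeds this value for every
other block, except that it is `(5n - 31 + t) / 3` for a quadrilateral with a single nontrivial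
branch, as in `G5`. Two such quadrilaterals force `n ≥ 2t + 3`, and then exceed it together if
`n ≥ 24`.
-/

section
open scoped Classical

section Potential

lemma det_updateCol_single_self {ι R : Type*} [Fintype ι] [DecidableEq ι] [CommRing R]
    (M : Matrix ι ι R) (i : ι) :
    (M.updateCol i (Pi.single i 1)).det =
      (M.submatrix (Subtype.val : {j // j ≠ i} → ι) Subtype.val).det := by
  have : Unique {j // j = i} := ⟨⟨⟨i, rfl⟩⟩, fun j => Subtype.ext j.2⟩
  have hcorner : ((M.updateCol i (Pi.single i 1)).toSquareBlockProp (· = i)).det = 1 := by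
    have hdefault : ((default : {j // j = i}) : ι) = i := (default : {j // j = i}).2
    simp [Matrix.det_unique, Matrix.toSquareBlockProp, Matrix.toBlock, hdefault]
  have hrest : (M.updateCol i (Pi.single i 1)).toSquareBlockProp (fun j => ¬ j = i) =
      M.submatrix (Subtype.val : {j // j ≠ i} → ι) Subtype.val := by
    ext j l
    exact Matrix.updateCol_ne l.2
  rw [Matrix.twoBlockTriangular_det _ (· = i)]
  · refine Eq.trans (congrArg₂ (· * ·) ?_ (congrArg Matrix.det hrest)) (one_mul _)
    convert hcorner
  · rintro j hj l rfl
    simp [hj]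

variable {V : Type*} [Fintype V] (G : SimpleGraph V)

lemma lapMatrix_mulVec_eq_sum {R : Type*} [Ring R] (g : V → R) (w : V) :
    (G.lapMatrix R).mulVec g w = ∑ z, if G.Adj w z then g w - g z else 0 := by
  rw [SimpleGraph.lapMatrix_mulVec_apply, ← sum_filter, sum_sub_distrib,
    ← SimpleGraph.neighborFinset_eq_filter, sum_const, nsmul_eq_mul,
    SimpleGraph.card_neighborFinset_eq_degree]

/-- The Laplacian of `G` with the row and the column of `u` deleted. -/
noncomputable def groundedLapMatrix (u : V) : Matrix {w // w ≠ u} {w // w ≠ u} ℝ :=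
  (G.lapMatrix ℝ).submatrix Subtype.val Subtype.val

variable {G}

lemma groundedLapMatrix_mulVec {u : V} {g : V → ℝ} (hg : g u = 0) (w : {w // w ≠ u}) :
    (groundedLapMatrix G u).mulVec (fun x => g x) w = (G.lapMatrix ℝ).mulVec g w := by
  simp only [Matrix.mulVec, dotProduct, groundedLapMatrix, Matrix.submatrix_apply]
  rw [← sum_subtype (univ.erase u) (p := (· ≠ u)) (by simp) (fun x => G.lapMatrix ℝ w x * g x),
    sum_erase _ (by simp [hg])]

lemma det_groundedLapMatrix_ne_zero (hG : G.Connected) (u : V) :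
    (groundedLapMatrix G u).det ≠ 0 := by
  intro hdet
  obtain ⟨x, hx, hLx⟩ := Matrix.exists_mulVec_eq_zero_iff.mpr hdet
  set g : V → ℝ := fun w => if hw : w ≠ u then x ⟨w, hw⟩ else 0 with hg
  have hgu : g u = 0 := by simp [hg]
  have hgx : (fun w : {w // w ≠ u} => g w) = x := by
    ext w
    simp [hg, w.2]
  have henergy : Matrix.toLinearMap₂' ℝ (G.lapMatrix ℝ) g g = 0 := by
    rw [Matrix.toLinearMap₂'_apply']
    refine sum_eq_zero fun w _ => ?_
    by_cases hw : w = u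
    · simp [hw, hgu]
    · rw [← groundedLapMatrix_mulVec hgu ⟨w, hw⟩, hgx, hLx, Pi.zero_apply, mul_zero]
  rw [SimpleGraph.lapMatrix_toLinearMap₂'_apply'_eq_zero_iff_forall_reachable] at henergy
  refine hx (funext fun w => ?_)
  rw [← hgx]
  exact (henergy w u (hG.preconnected w u)).trans hgu

lemma effRes_eq_det_div_det {u v : V} (hvu : v ≠ u) :
    effRes G u v =
      ((groundedLapMatrix G u).updateCol ⟨v, hvu⟩ (Pi.single ⟨v, hvu⟩ 1)).det /
        (groundedLapMatrix G u).det := by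
  let e : {w // w ≠ u ∧ w ≠ v} ≃ {w : {w // w ≠ u} // w ≠ ⟨v, hvu⟩} :=
    { toFun := fun w => ⟨⟨w, w.2.1⟩, fun h => w.2.2 (congrArg Subtype.val h)⟩
      invFun := fun w => ⟨w.1.1, w.1.2, fun h => w.2 (Subtype.ext h)⟩ }
  rw [det_updateCol_single_self, ← Matrix.det_submatrix_equiv_self e]
  simp only [effRes, hvu.symm, if_false]
  congr! 2 <;>
  · ext
    simp only [groundedLapMatrix, Matrix.submatrix_apply, e, Equiv.coe_fn_mk]
    congr!

/-- Ohm's law: a potential driving a unit current from `u` to `v` computes the resistance. -/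
theorem effRes_eq_sub_of_potential (hG : G.Connected) {u v : V} {f : V → ℝ}
    (hf : ∀ w, (∑ z, if G.Adj w z then f w - f z else 0) =
      (if w = u then 1 else 0) - (if w = v then 1 else 0)) :
    effRes G u v = f u - f v := by
  by_cases hvu : v = u
  · simp [effRes, hvu]
  set L := groundedLapMatrix G u with hL
  set v' : {w // w ≠ u} := ⟨v, hvu⟩
  have hcurrent : L.mulVec (fun x => f u - f x) = Pi.single v' 1 := by
    ext w
    have hw : (w : V) = v ↔ w = v' := by simp [v', Subtype.ext_iff]
    rw [hL, groundedLapMatrix_mulVec (g := fun x => f u - f x) (sub_self _),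
      lapMatrix_mulVec_eq_sum, ← neg_inj, ← sum_neg_distrib, Pi.single_apply]
    refine Eq.trans (sum_congr rfl fun z _ => ?_) ((hf w).trans (by simp [hw, w.2]))
    split_ifs <;> simp
  have hcramer : L.det * (f u - f v) = (L.updateCol v' (Pi.single v' 1)).det := by
    have hsmul := congrArg L.adjugate.mulVec hcurrent
    rw [Matrix.mulVec_mulVec, Matrix.adjugate_mul, Matrix.smul_mulVec, Matrix.one_mulVec,
      ← Matrix.cramer_eq_adjugate_mulVec] at hsmul
    exact (congrFun hsmul v').trans (Matrix.cramer_apply ..)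
  rw [effRes_eq_det_div_det hvu, div_eq_iff (det_groundedLapMatrix_ne_zero hG u)]
  rw [← hcramer, mul_comm]

end Potential

section CycleResistance

/-- The effective resistance between `i` and `j` in the cycle `C_k`, for `k ≥ 2`. The factor `2`
for `k = 2` is there because `SimpleGraph.cycleGraph 2` is a single edge, while `d (k - d) / k`
is the resistance of two parallel paths of lengths `d` and `k - d`. -/
noncomputable def cycleResistance (k : ℕ) (i j : Fin k) : ℝ :=
  (if k = 2 then 2 else 1) * (((i - j).val : ℝ) * (k - (i - j).val) / k)

/-- The sum of the resistances from a vertex of `C_k` to all others. -/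
noncomputable def cycleTransmission (k : ℕ) : ℝ := if k = 2 then 1 else ((k : ℝ) ^ 2 - 1) / 6

variable {k : ℕ}

lemma cycleResistance_self (i : Fin k) : cycleResistance k i i = 0 := by
  have : NeZero k := ⟨i.pos.ne'⟩
  simp [cycleResistance]

lemma cycleResistance_comm (i j : Fin k) : cycleResistance k i j = cycleResistance k j i := by
  rcases eq_or_ne i j with rfl | hij
  · rfl
  have hsum : (i - j).val + (j - i).val = k := by
    rcases lt_or_gt_of_ne hij with h | h <;>
    · rw [Fin.coe_sub_iff_lt.mpr h, Fin.sub_val_of_le h.le]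
      have := Fin.lt_def.mp h
      omega
  have hval : ((i - j).val : ℝ) = k - (j - i).val := by
    rw [eq_sub_iff_add_eq]
    exact_mod_cast hsum
  rw [cycleResistance, cycleResistance, hval]
  ring

lemma cycleResistance_nonneg (i j : Fin k) : 0 ≤ cycleResistance k i j := by
  have : (0 : ℝ) ≤ k - (i - j).val := sub_nonneg.mpr (by exact_mod_cast (i - j).2.le)
  unfold cycleResistance
  positivity

lemma cycleResistance_of_size_two {i j : Fin k} (hk : k = 2) (hij : i ≠ j) :
    cycleResistance k i j = 1 := by
  subst hk
  have : (i - j).val = 1 := by revert i j; decide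
  norm_num [cycleResistance, this]

lemma cycleResistance_of_size_three {i j : Fin k} (hk : k = 3) (hij : i ≠ j) :
    cycleResistance k i j = 2 / 3 := by
  subst hk
  have : (i - j).val = 1 ∨ (i - j).val = 2 := by revert i j; decide
  rcases this with h | h <;> norm_num [cycleResistance, h]

lemma le_cycleResistance_of_size_four {i j : Fin k} (hk : k = 4) (hij : i ≠ j) :
    3 / 4 ≤ cycleResistance k i j := by
  subst hk
  have : (i - j).val = 1 ∨ (i - j).val = 2 ∨ (i - j).val = 3 := by revert i j; decide
  rcases this with h | h | h <;> norm_num [cycleResistance, h]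

lemma sum_cycleResistance (i : Fin k) : ∑ j, cycleResistance k i j = cycleTransmission k := by
  have : NeZero k := ⟨i.pos.ne'⟩
  have hk : (k : ℝ) ≠ 0 := NeZero.ne _
  have hshift : ∑ j, cycleResistance k i j =
      (if k = 2 then 2 else 1) * ∑ d ∈ range k, ((d : ℝ) * (k - d) / k) := by
    rw [← Fin.sum_univ_eq_sum_range (fun d => ((d : ℝ) * (k - d) / k)) k, mul_sum]
    exact Fintype.sum_equiv (Equiv.subLeft i) _ _ fun j => by simp [cycleResistance]
  have hclosed (N : ℕ) : ∑ d ∈ range N, ((d : ℝ) * (k - d) / k) =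
      ((N : ℝ) * (N - 1) / 2 * k - N * (N - 1) * (2 * N - 1) / 6) / k := by
    induction N with
    | zero => simp
    | succ N ih => rw [sum_range_succ, ih]; push_cast; ring
  rw [hshift, hclosed, cycleTransmission]
  split_ifs with h
  · norm_num [h]
  · field_simp
    ring

lemma second_difference_cycleResistance {m : ℕ} (d : Fin (m + 3)) :
    (((d + 1).val : ℝ) * ((m + 3 : ℕ) - (d + 1).val) / (m + 3 : ℕ) -
        d.val * ((m + 3 : ℕ) - d.val) / (m + 3 : ℕ)) +
      ((d - 1).val * ((m + 3 : ℕ) - (d - 1).val) / (m + 3 : ℕ) -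
        d.val * ((m + 3 : ℕ) - d.val) / (m + 3 : ℕ)) =
      2 * ((if d = 0 then 1 else 0) - 1 / ((m + 3 : ℕ) : ℝ)) := by
  have hsucc : ((d + 1).val : ℝ) * ((m + 3 : ℕ) - (d + 1).val) =
      (d.val + 1) * ((m + 3 : ℕ) - (d.val + 1)) := by
    rw [Fin.val_add_one]
    split_ifs with h
    · rw [h, Fin.val_last]
      push_cast
      ring
    · push_cast
      ring
  have hm : ((m + 3 : ℕ) : ℝ) ≠ 0 := by positivity
  rw [hsucc]
  rcases eq_or_ne d 0 with rfl | hd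
  · have : (0 - 1 : Fin (m + 3)).val = m + 2 := by simp
    rw [this, if_pos rfl, Fin.val_zero]
    field_simp
    push_cast
    ring
  · have hpos : 1 ≤ d.val := Nat.one_le_iff_ne_zero.mpr (Fin.val_ne_zero_iff.mpr hd)
    rw [Fin.val_sub_one_of_ne_zero hd, if_neg hd]
    push_cast [hpos]
    field_simp
    ring

lemma laplacian_cycleResistance (hk : 2 ≤ k) (i j : Fin k) :
    (∑ l, if (SimpleGraph.cycleGraph k).Adj j l then
        cycleResistance k i l - cycleResistance k i j else 0) =
      2 * ((if i = j then 1 else 0) - 1 / (k : ℝ)) := by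
  obtain ⟨m, rfl⟩ := Nat.exists_eq_add_of_le' hk
  rcases m with _ | m
  · fin_cases i <;> fin_cases j <;>
      simp [Fin.sum_univ_two, SimpleGraph.cycleGraph_adj, cycleResistance] <;> norm_num
  have hfilter : univ.filter ((SimpleGraph.cycleGraph (m + 3)).Adj j) = {j - 1, j + 1} := by
    rw [← SimpleGraph.cycleGraph_neighborFinset]
    ext
    simp
  have hne : j - 1 ≠ j + 1 := fun h => by
    have hdegree : (SimpleGraph.cycleGraph (m + 3)).degree j = 2 :=
      SimpleGraph.cycleGraph_degree_three_le
    rw [SimpleGraph.cycleGraph_degree_two_le, h] at hdegree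
    simp at hdegree
  have hpred : i - (j - 1) = i - j + 1 := by abel
  have hsucc : i - (j + 1) = i - j - 1 := by abel
  rw [← sum_filter, hfilter, sum_pair hne]
  simpa [add_assoc, cycleResistance, hpred, hsucc, sub_eq_zero] using
    second_difference_cycleResistance (m := m) (i - j)

end CycleResistance

/-- A block of a cactus: a copy of the cycle `C_size` in `G` (a single edge if `size = 2`) together
with a projection `proj` sending each vertex of `G` to the position on the block where it is
attached. The only edges between vertices with different projections are those of the block. -/
structure CactusBlock {V : Type*} (G : SimpleGraph V) where
  size : ℕ
  two_le_size : 2 ≤ size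
  vertex : Fin size → V
  proj : V → Fin size
  proj_vertex : ∀ i, proj (vertex i) = i
  adj_vertex : ∀ {i j}, (SimpleGraph.cycleGraph size).Adj i j → G.Adj (vertex i) (vertex j)
  crossing : ∀ {w z}, G.Adj w z → proj w ≠ proj z →
    vertex (proj w) = w ∧ vertex (proj z) = z ∧ (SimpleGraph.cycleGraph size).Adj (proj w) (proj z)

namespace CactusBlock
variable {V : Type*} {G : SimpleGraph V} (B : CactusBlock G)

lemma vertex_injective : Function.Injective B.vertex :=
  Function.LeftInverse.injective B.proj_vertex

/-- The vertex of the block through which `w` is attached to it. -/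
def gate (w : V) : V := B.vertex (B.proj w)

lemma gate_vertex (i : Fin B.size) : B.gate (B.vertex i) = B.vertex i := by
  rw [gate, proj_vertex]

lemma gate_eq_iff {u w : V} : B.gate u = w ↔ B.proj u = B.proj w ∧ B.gate w = w := by
  refine ⟨?_, fun ⟨hproj, hgate⟩ => by rw [gate, hproj]; exact hgate⟩
  rintro rfl
  exact ⟨(B.proj_vertex _).symm, B.gate_vertex _⟩

lemma eq_of_proj_eq {B : CactusBlock G} {w x : V} (hw : B.gate w = w) (hx : B.gate x = x)
    (h : B.proj w = B.proj x) : w = x := by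
  rw [← hw, ← hx, gate, gate, h]

/-- The resistance between the projections of two vertices to the block. -/
noncomputable def resistance (u v : V) : ℝ := cycleResistance B.size (B.proj u) (B.proj v)

variable [Fintype V]

lemma card_filter_gate_eq : #{w | B.gate w = w} = B.size := by
  have himage : ({w | B.gate w = w} : Finset V) = univ.image B.vertex := by
    ext w
    simp only [mem_filter, mem_univ, true_and, mem_image]
    exact ⟨fun h => ⟨_, h⟩, by rintro ⟨i, rfl⟩; exact B.gate_vertex i⟩
  rw [himage, card_image_of_injective _ B.vertex_injective, card_univ, Fintype.card_fin]

lemma sum_crossing (w : V) (g : Fin B.size → ℝ) :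
    (∑ z, if G.Adj w z ∧ B.proj w ≠ B.proj z then g (B.proj z) else 0) =
      if B.gate w = w then
        ∑ l, if (SimpleGraph.cycleGraph B.size).Adj (B.proj w) l then g l else 0 else 0 := by
  split_ifs with hw
  · rw [← sum_filter, ← sum_filter]
    symm
    refine sum_bij (fun l _ => B.vertex l) ?_ (fun _ _ _ _ h => B.vertex_injective h) ?_ ?_
    · intro l hl
      simp only [mem_filter, mem_univ, true_and, B.proj_vertex] at hl ⊢
      have hadj := B.adj_vertex hl
      rw [← gate, hw] at hadj
      exact ⟨hadj, hl.ne⟩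
    · intro z hz
      simp only [mem_filter, mem_univ, true_and] at hz
      obtain ⟨-, hgate, hadj⟩ := B.crossing hz.1 hz.2
      exact ⟨B.proj z, by simpa using hadj, hgate⟩
    · intro l _
      rw [B.proj_vertex]
  · refine sum_eq_zero fun z _ => if_neg fun hz => hw (B.crossing hz.1 hz.2).1

lemma laplacian_resistance (u w : V) :
    (∑ z, if G.Adj w z then B.resistance u z - B.resistance u w else 0) =
      2 * ((if B.gate u = w then 1 else 0) - (if B.gate w = w then 1 / (B.size : ℝ) else 0)) := by
  set g : Fin B.size → ℝ := fun l => cycleResistance B.size (B.proj u) l - B.resistance u w with hg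
  have hcrossing : (∑ z, if G.Adj w z then B.resistance u z - B.resistance u w else 0) =
      ∑ z, if G.Adj w z ∧ B.proj w ≠ B.proj z then g (B.proj z) else 0 := by
    refine sum_congr rfl fun z _ => ?_
    by_cases hproj : B.proj w = B.proj z <;> simp [hg, hproj, resistance]
  have hlaplacian := laplacian_cycleResistance B.two_le_size (B.proj u) (B.proj w)
  rw [hcrossing, sum_crossing]
  simp only [B.gate_eq_iff (u := u), hg, resistance, hlaplacian]
  split_ifs <;> simp_all

end CactusBlock

/-- The blocks `B` decompose `G` if every edge of `G` belongs to exactly one of them. -/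
def IsBlockDecomposition {V β : Type*} {G : SimpleGraph V} (B : β → CactusBlock G) : Prop :=
  ∀ w z, G.Adj w z → ∃! b, (B b).proj w ≠ (B b).proj z

namespace IsBlockDecomposition
variable {V β : Type*} {G : SimpleGraph V} [Fintype β] {B : β → CactusBlock G}

lemma sum_gate_sub {A : Type*} [AddCommGroup A] (hB : IsBlockDecomposition B) (hG : G.Connected)
    (φ : V → A) (u v : V) : ∑ b, (φ ((B b).gate u) - φ ((B b).gate v)) = φ u - φ v := by
  obtain ⟨p⟩ := hG.preconnected u v
  induction p with
  | nil => simp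
  | @cons u x v hadj _ ih =>
    have hedge : ∑ b, (φ ((B b).gate u) - φ ((B b).gate x)) = φ u - φ x := by
      obtain ⟨b, hb, huniq⟩ := hB u x hadj
      rw [sum_eq_single b]
      · obtain ⟨hu, hx, -⟩ := (B b).crossing hadj hb
        rw [CactusBlock.gate, CactusBlock.gate, hu, hx]
      · intro b' _ hb'
        have : (B b').proj u = (B b').proj x := by_contra fun h => hb' (huniq b' h)
        rw [CactusBlock.gate, CactusBlock.gate, this, sub_self]
      · simp
    rw [← sub_add_sub_cancel (φ u) (φ x), ← hedge, ← ih, ← sum_add_distrib]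
    simp

variable [Fintype V]

theorem effRes_eq_sum_resistance (hB : IsBlockDecomposition B) (hG : G.Connected) (u v : V) :
    effRes G u v = ∑ b, (B b).resistance u v := by
  rw [effRes_eq_sub_of_potential hG
    (f := fun w => ∑ b, (1 / 2) * ((B b).resistance v w - (B b).resistance u w))]
  · rw [← sum_sub_distrib]
    refine sum_congr rfl fun b _ => ?_
    simp only [CactusBlock.resistance, cycleResistance_self, cycleResistance_comm ((B b).proj v)]
    ring
  · intro w
    have hterm (z : V) : (if G.Adj w z then
          ∑ b, (1 / 2) * ((B b).resistance v w - (B b).resistance u w) -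
            ∑ b, (1 / 2) * ((B b).resistance v z - (B b).resistance u z) else 0) =
        ∑ b, (1 / 2) * ((if G.Adj w z then (B b).resistance u z - (B b).resistance u w else 0) -
          (if G.Adj w z then (B b).resistance v z - (B b).resistance v w else 0)) := by
      split_ifs
      · rw [← sum_sub_distrib]
        exact sum_congr rfl fun b _ => by ring
      · simp
    have htelescope := hB.sum_gate_sub hG (fun x => if x = w then (1 : ℝ) else 0) u v
    simp only [eq_comm (a := u), eq_comm (a := v)] at htelescope
    rw [sum_congr rfl fun z _ => hterm z, sum_comm, ← htelescope]
    refine sum_congr rfl fun b _ => ?_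
    rw [← mul_sum, sum_sub_distrib, CactusBlock.laplacian_resistance,
      CactusBlock.laplacian_resistance]
    ring

lemma sum_size_sub_one (hB : IsBlockDecomposition B) (hG : G.Connected) :
    ∑ b, (((B b).size : ℝ) - 1) = Fintype.card V - 1 := by
  obtain ⟨u⟩ := hG.nonempty
  have htelescope (w : V) := hB.sum_gate_sub hG (fun x => if x = w then (1 : ℝ) else 0) w u
  have hsum := sum_congr (rfl : (univ : Finset V) = univ) fun w _ => htelescope w
  rw [sum_comm] at hsum
  simpa [sum_sub_distrib, ← card_filter, CactusBlock.card_filter_gate_eq] using hsum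

end IsBlockDecomposition

section CyclomaticNumber
variable {V : Type*} {G : SimpleGraph V}

/-- The cyclomatic number `|E| - |V| + 1`, the number of independent cycles of a connected graph. -/
noncomputable def cyclomaticNumber (G : SimpleGraph V) : ℝ :=
  Nat.card G.edgeSet - Nat.card V + 1

lemma cyclomaticNumber_nonneg [Finite V] (hG : G.Connected) : 0 ≤ cyclomaticNumber G := by
  have : (Nat.card V : ℝ) ≤ Nat.card G.edgeSet + 1 := by
    exact_mod_cast hG.card_vert_le_card_edgeSet_add_one
  rw [cyclomaticNumber]
  linarith

lemma cyclomaticNumber_eq_zero_of_card_le_two [Finite V] (hG : G.Connected)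
    (hV : Nat.card V ≤ 2) : cyclomaticNumber G = 0 := by
  have := Fintype.ofFinite V
  have := hG.nonempty
  have hpos : 0 < Nat.card V := Nat.card_pos
  have hchoose : Nat.card G.edgeSet ≤ (Nat.card V).choose 2 := by
    rw [Nat.card_eq_fintype_card, ← SimpleGraph.edgeFinset_card, Nat.card_eq_fintype_card]
    exact SimpleGraph.card_edgeFinset_le_card_choose_two
  have hle : Nat.card G.edgeSet + 1 ≤ Nat.card V := by
    interval_cases Nat.card V <;> simpa using hchoose
  have hle' : (Nat.card G.edgeSet + 1 : ℝ) ≤ Nat.card V := by exact_mod_cast hle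
  refine le_antisymm ?_ (cyclomaticNumber_nonneg hG)
  rw [cyclomaticNumber]
  linarith

variable [Fintype V]

lemma degree_eq_sum (G : SimpleGraph V) [DecidableRel G.Adj] (w : V) :
    (G.degree w : ℝ) = ∑ z, if G.Adj w z then 1 else 0 := by
  rw [← SimpleGraph.card_neighborFinset_eq_degree, SimpleGraph.neighborFinset_eq_filter,
    sum_boole]

lemma sum_degree_eq (G : SimpleGraph V) [DecidableRel G.Adj] :
    ∑ w, (G.degree w : ℝ) = 2 * (cyclomaticNumber G + Fintype.card V - 1) := by
  have hdegree : ∑ w, (G.degree w : ℝ) = 2 * Nat.card G.edgeSet := by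
    rw [Nat.card_eq_fintype_card, ← SimpleGraph.edgeFinset_card]
    exact_mod_cast G.sum_degrees_eq_twice_card_edges
  rw [hdegree, cyclomaticNumber, Nat.card_eq_fintype_card (α := V)]
  ring

end CyclomaticNumber

/-- The degree of the vertices of `C_k`, for `k ≥ 2`. -/
noncomputable def cycleDegree (k : ℕ) : ℝ := if k = 2 then 1 else 2

lemma sum_cycleGraph_adj {k : ℕ} (hk : 2 ≤ k) (j : Fin k) :
    (∑ l, if (SimpleGraph.cycleGraph k).Adj j l then (1 : ℝ) else 0) = cycleDegree k := by
  rw [← degree_eq_sum]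
  obtain ⟨m, rfl⟩ := Nat.exists_eq_add_of_le' hk
  rcases m with _ | m
  · have : (SimpleGraph.cycleGraph 2).degree j = 1 := by revert j; decide
    simp [cycleDegree, this]
  · rw [SimpleGraph.cycleGraph_degree_three_le]
    simp [cycleDegree]

namespace CactusBlock
variable {V : Type*} {G : SimpleGraph V} (B : CactusBlock G)

/-- The branch hanging at position `i` of the block, which contains the vertex `B.vertex i`. -/
def branch (i : Fin B.size) : Set V := {w | B.proj w = i}

lemma reachable_induce_branch {i : Fin B.size} {w x : V} (p : G.Walk w x) (hx : x = B.vertex i)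
    (hw : B.proj w = i) :
    (G.induce (B.branch i)).Reachable ⟨w, hw⟩ ⟨B.vertex i, B.proj_vertex i⟩ := by
  induction p with
  | nil => subst hx; rfl
  | @cons w z x hadj _ ih =>
    by_cases hz : B.proj z = i
    · exact SimpleGraph.Reachable.trans
        (SimpleGraph.Adj.reachable (by simpa using hadj)) (ih hx hz)
    · have hgate := (B.crossing hadj (by rw [hw]; exact Ne.symm hz)).1
      simp only [hw] at hgate
      subst hgate
      rfl

lemma connected_induce_branch (hG : G.Connected) (i : Fin B.size) :
    (G.induce (B.branch i)).Connected := by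
  rw [SimpleGraph.connected_iff_exists_forall_reachable]
  refine ⟨⟨B.vertex i, B.proj_vertex i⟩, fun ⟨w, hw⟩ => ?_⟩
  obtain ⟨p⟩ := hG.preconnected w (B.vertex i)
  exact (B.reachable_induce_branch p rfl hw).symm

/-- The number of independent cycles of the branch at `i`. -/
noncomputable def branchCycles (i : Fin B.size) : ℝ := cyclomaticNumber (G.induce (B.branch i))

variable [Fintype V]

/-- The number of vertices of the branch at `i` outside the block. -/
noncomputable def extra (i : Fin B.size) : ℕ := #{w | B.proj w = i} - 1

lemma card_filter_proj (i : Fin B.size) : #{w | B.proj w = i} = B.extra i + 1 := by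
  have : 0 < #{w | B.proj w = i} := card_pos.mpr ⟨B.vertex i, by simp [B.proj_vertex]⟩
  rw [extra]
  omega

lemma natCard_branch (i : Fin B.size) : Nat.card (B.branch i) = B.extra i + 1 := by
  rw [← B.card_filter_proj, Nat.card_eq_fintype_card]
  exact Fintype.card_of_subtype _ (by simp [branch])

lemma sum_extra : ∑ i, B.extra i + B.size = Fintype.card V := by
  have hfiber := card_eq_sum_card_fiberwise (s := univ) (t := univ) (f := B.proj) (by simp)
  simp only [card_filter_proj, sum_add_distrib] at hfiber
  simpa using hfiber.symm

lemma branchCycles_nonneg (hG : G.Connected) (i : Fin B.size) : 0 ≤ B.branchCycles i :=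
  cyclomaticNumber_nonneg (B.connected_induce_branch hG i)

lemma branchCycles_eq_zero_of_extra_le_one (hG : G.Connected) {i : Fin B.size}
    (hi : B.extra i ≤ 1) : B.branchCycles i = 0 :=
  cyclomaticNumber_eq_zero_of_card_le_two (B.connected_induce_branch hG i)
    (by rw [natCard_branch]; omega)

lemma sum_adj_crossing (w : V) :
    (∑ z, if G.Adj w z ∧ B.proj w ≠ B.proj z then (1 : ℝ) else 0) =
      if B.gate w = w then cycleDegree B.size else 0 := by
  rw [B.sum_crossing w fun _ => 1, sum_cycleGraph_adj B.two_le_size]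

/-- The total degree in `G` of the vertices of the branch at `i`. -/
noncomputable def branchDegree (i : Fin B.size) : ℝ := ∑ w with B.proj w = i, (G.degree w : ℝ)

lemma degree_eq_add_degree_induce {i : Fin B.size} (w : B.branch i) :
    (G.degree w : ℝ) = (if (w : V) = B.vertex i then cycleDegree B.size else 0) +
      (G.induce (B.branch i)).degree w := by
  obtain ⟨w, rfl⟩ := w
  have hinner : ((G.induce (B.branch (B.proj w))).degree ⟨w, rfl⟩ : ℝ) =
      ∑ z, if G.Adj w z ∧ B.proj z = B.proj w then 1 else 0 := by
    rw [degree_eq_sum]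
    simp only [SimpleGraph.comap_adj, Function.Embedding.subtype_apply, and_comm (a := G.Adj w _),
      ite_and]
    exact (sum_subtype {z | B.proj z = B.proj w} (p := (· ∈ B.branch (B.proj w)))
      (by simp [branch]) fun z => if G.Adj w z then (1 : ℝ) else 0).symm.trans (sum_filter ..)
  have hgate : w = B.vertex (B.proj w) ↔ B.gate w = w := eq_comm
  simp only [hinner, hgate, ← sum_adj_crossing]
  rw [degree_eq_sum, ← sum_add_distrib]
  refine sum_congr rfl fun z _ => ?_
  by_cases hadj : G.Adj w z <;> by_cases hproj : B.proj w = B.proj z <;>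
    simp [hadj, hproj, Ne.symm]

lemma branchDegree_eq (i : Fin B.size) :
    B.branchDegree i = cycleDegree B.size + 2 * B.extra i + 2 * B.branchCycles i := by
  have hsplit : B.branchDegree i = ∑ w : B.branch i, (G.degree (w : V) : ℝ) :=
    sum_subtype _ (by simp [branch]) _
  have hvertex (w : B.branch i) : (w : V) = B.vertex i ↔ w = ⟨B.vertex i, B.proj_vertex i⟩ := by
    rw [Subtype.ext_iff]
  rw [hsplit, sum_congr rfl fun w _ => B.degree_eq_add_degree_induce w, sum_add_distrib,
    sum_degree_eq, ← Nat.card_eq_fintype_card, natCard_branch, ← branchCycles]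
  simp only [hvertex, sum_ite_eq', mem_univ, if_true]
  push_cast
  ring

lemma sum_extra_eq_sub : ∑ i, (B.extra i : ℝ) = Fintype.card V - B.size := by
  rw [eq_sub_iff_add_eq]
  exact_mod_cast B.sum_extra

lemma sum_branchCycles :
    ∑ i, B.branchCycles i = if B.size = 2 then cyclomaticNumber G else cyclomaticNumber G - 1 := by
  have hfiber : ∑ i, B.branchDegree i = ∑ w, (G.degree w : ℝ) := sum_fiberwise univ B.proj _
  simp only [branchDegree_eq, sum_add_distrib, ← mul_sum, sum_const, card_univ, Fintype.card_fin,
    nsmul_eq_mul, sum_degree_eq, sum_extra_eq_sub, cycleDegree] at hfiber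
  split_ifs with hsize
  · simp only [hsize, if_true, Nat.cast_ofNat] at hfiber
    linarith
  · simp only [hsize, if_false] at hfiber
    linarith

/-- The total weight of the pairs of vertices both outside the block: a branch at `i` with `a i`
extra vertices carries degree `2 (a i + s i)` beyond that of the block, where `s i` is its number
of independent cycles. -/
noncomputable def interaction : ℝ :=
  ∑ i, ∑ j, 2 * (B.extra i + B.branchCycles i) * B.extra j * cycleResistance B.size i j

/-- The part of the degree resistance distance due to the block. -/
noncomputable def contribution : ℝ := ∑ u, ∑ v, (G.degree u : ℝ) * B.resistance u v

lemma contribution_eq_sum_branchDegree :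
    B.contribution =
      ∑ i, ∑ j, B.branchDegree i * (B.extra j + 1) * cycleResistance B.size i j := by
  have hinner (u : V) : ∑ v, B.resistance u v =
      ∑ j, (B.extra j + 1) * cycleResistance B.size (B.proj u) j := by
    rw [← sum_fiberwise univ B.proj]
    refine sum_congr rfl fun j _ => ?_
    rw [sum_congr rfl (g := fun _ => cycleResistance B.size (B.proj u) j)
      (fun v hv => by rw [resistance, (mem_filter.mp hv).2]), sum_const, card_filter_proj]
    simp
  rw [contribution, ← sum_fiberwise univ B.proj]
  refine sum_congr rfl fun i _ => ?_
  simp only [mul_assoc, ← mul_sum]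
  rw [branchDegree, sum_mul]
  exact sum_congr rfl fun u hu => by rw [hinner, (mem_filter.mp hu).2]

lemma contribution_eq :
    B.contribution = cycleTransmission B.size * (cycleDegree B.size * B.size +
      (2 + cycleDegree B.size) * (Fintype.card V - B.size) + 2 * ∑ i, B.branchCycles i) +
        B.interaction := by
  have hcol (j : Fin B.size) : ∑ i, cycleResistance B.size i j = cycleTransmission B.size := by
    simp_rw [cycleResistance_comm _ j, sum_cycleResistance]
  have hsplit : B.contribution =
      ∑ i, ∑ j, B.branchDegree i * cycleResistance B.size i j +
        ∑ j, ∑ i, cycleDegree B.size * B.extra j * cycleResistance B.size i j +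
          B.interaction := by
    rw [contribution_eq_sum_branchDegree, interaction, sum_comm (s := univ (α := Fin B.size))
      (f := fun j i => cycleDegree B.size * B.extra j * cycleResistance B.size i j),
      ← sum_add_distrib, ← sum_add_distrib]
    refine sum_congr rfl fun i _ => ?_
    rw [← sum_add_distrib, ← sum_add_distrib]
    refine sum_congr rfl fun j _ => ?_
    rw [branchDegree_eq]
    ring
  simp only [hsplit, ← mul_sum, ← sum_mul, sum_cycleResistance, hcol, branchDegree_eq,
    sum_add_distrib, sum_extra_eq_sub, sum_const, card_univ, Fintype.card_fin, nsmul_eq_mul]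
  ring

end CactusBlock

section Prices
variable {V : Type*} [Fintype V] (G : SimpleGraph V)

/-- The contribution to the degree resistance distance of a pendent edge of `G`. -/
noncomputable def pendentPrice : ℝ := 3 * Fintype.card V - 4 + 2 * cyclomaticNumber G

/-- The contribution of a triangle of `G` of which two vertices have degree `2`. -/
noncomputable def trianglePrice : ℝ := 8 / 3 * (2 * Fintype.card V + cyclomaticNumber G - 4)

end Prices

namespace CactusBlock
variable {V : Type*} {G : SimpleGraph V} [Fintype V] (B : CactusBlock G)

/-- The contribution of the block beyond a baseline price. The baseline depends on the block only
through its size, and in a way that makes its total over a decomposition depend only on the number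
of vertices and on the cyclomatic number: an edge is charged as a pendent edge, a cycle as a
triangle with one additional pendent edge for each vertex beyond the third. -/
noncomputable def excess : ℝ :=
  B.contribution - ((B.size - 1) * pendentPrice G +
    if B.size = 2 then 0 else trianglePrice G - 2 * pendentPrice G)

/-- The excess of a cycle of length `k` all of whose branches but one are trivial. -/
noncomputable def starExcess (G : SimpleGraph V) (k : ℕ) : ℝ :=
  if k = 2 then 0 else
    ((k : ℝ) ^ 2 - 1) / 3 * (2 * Fintype.card V - k + cyclomaticNumber G - 1) -
      trianglePrice G - (k - 3) * pendentPrice G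

lemma excess_eq : B.excess = starExcess G B.size + B.interaction := by
  rw [excess, contribution_eq, sum_branchCycles]
  unfold starExcess cycleTransmission cycleDegree
  split_ifs with hsize
  · rw [hsize, pendentPrice]
    push_cast
    ring
  · ring

end CactusBlock

namespace IsBlockDecomposition
variable {V β : Type*} {G : SimpleGraph V} [Fintype V] [Fintype β] {B : β → CactusBlock G}

lemma sum_degree_eq_sum_size (hB : IsBlockDecomposition B) :
    ∑ w, (G.degree w : ℝ) = ∑ b, (B b).size * cycleDegree (B b).size := by
  have hedge (w z : V) : (if G.Adj w z then (1 : ℝ) else 0) =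
      ∑ b, if G.Adj w z ∧ (B b).proj w ≠ (B b).proj z then 1 else 0 := by
    split_ifs with hadj
    · obtain ⟨b, hb, huniq⟩ := hB w z hadj
      rw [sum_eq_single b (fun b' _ hb' => if_neg fun h => hb' (huniq b' h.2)) (by simp),
        if_pos ⟨hadj, hb⟩]
    · simp [hadj]
  have hblock (b : β) : (∑ w, ∑ z, if G.Adj w z ∧ (B b).proj w ≠ (B b).proj z then (1 : ℝ) else 0) =
      (B b).size * cycleDegree (B b).size := by
    simp only [CactusBlock.sum_adj_crossing]
    rw [← sum_filter, sum_const, CactusBlock.card_filter_gate_eq, nsmul_eq_mul]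
  simp only [degree_eq_sum, hedge]
  rw [sum_congr rfl fun w _ => sum_comm, sum_comm, sum_congr rfl fun b _ => hblock b]

lemma card_filter_size_ne_two (hB : IsBlockDecomposition B) (hG : G.Connected) :
    (#{b | (B b).size ≠ 2} : ℝ) = cyclomaticNumber G := by
  have hterm (b : β) : (B b).size * cycleDegree (B b).size =
      2 * ((B b).size - 1) + 2 * (if (B b).size ≠ 2 then (1 : ℝ) else 0) := by
    by_cases hsize : (B b).size = 2
    · norm_num [cycleDegree, hsize]
    · rw [cycleDegree, if_neg hsize, if_pos hsize]
      ring
  have hdegree := sum_degree_eq G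
  rw [hB.sum_degree_eq_sum_size, sum_congr rfl fun b _ => hterm b, sum_add_distrib, ← mul_sum,
    ← mul_sum, hB.sum_size_sub_one hG, sum_boole] at hdegree
  linarith

lemma degRes_eq_sum_contribution (hB : IsBlockDecomposition B) (hG : G.Connected) :
    degRes G = ∑ b, (B b).contribution := by
  have hcomm (u v : V) : effRes G u v = effRes G v u := by
    simp only [hB.effRes_eq_sum_resistance hG, CactusBlock.resistance]
    exact sum_congr rfl fun b _ => cycleResistance_comm _ _
  have hswap : ∑ u, ∑ v, (G.degree v : ℝ) * effRes G u v =
      ∑ u, ∑ v, (G.degree u : ℝ) * effRes G u v := by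
    rw [sum_comm]
    simp only [hcomm]
  have hdegRes : degRes G =
      1 / 2 * ∑ u, ∑ v, ((G.degree u : ℝ) + G.degree v) * effRes G u v := by
    unfold degRes
    congr!
  have hdegRes' : degRes G = ∑ u, ∑ v, (G.degree u : ℝ) * effRes G u v := by
    simp only [hdegRes, add_mul, sum_add_distrib, hswap]
    ring
  simp only [hdegRes', hB.effRes_eq_sum_resistance hG, mul_sum, CactusBlock.contribution]
  rw [sum_congr rfl fun u _ => sum_comm, sum_comm]

theorem degRes_eq_add_sum_excess (hB : IsBlockDecomposition B) (hG : G.Connected) :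
    degRes G = cyclomaticNumber G * trianglePrice G +
      (Fintype.card V - 1 - 2 * cyclomaticNumber G) * pendentPrice G + ∑ b, (B b).excess := by
  have hprice : ∑ b, (((B b).size - 1) * pendentPrice G +
      if (B b).size = 2 then 0 else trianglePrice G - 2 * pendentPrice G) =
      (Fintype.card V - 1) * pendentPrice G +
        cyclomaticNumber G * (trianglePrice G - 2 * pendentPrice G) := by
    rw [sum_add_distrib, ← sum_mul, hB.sum_size_sub_one hG, ← hB.card_filter_size_ne_two hG]
    simp only [← ite_not ((B _).size = 2), ← sum_filter, sum_const, nsmul_eq_mul, ne_eq]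
  simp only [CactusBlock.excess]
  rw [sum_sub_distrib, hprice, ← hB.degRes_eq_sum_contribution hG]
  ring

end IsBlockDecomposition

lemma exists_univ_eq_of_size_three {k : ℕ} (hk : k = 3) {i j : Fin k} (hij : i ≠ j) :
    ∃ l, i ≠ l ∧ j ≠ l ∧ univ = {i, j, l} := by
  subst hk
  revert i j
  decide

lemma two_mul_sum_le_sum_mul_sum_erase {k : ℕ} (hk : k = 3) {a : Fin k → ℕ}
    (hstar : ∀ i, 0 < ∑ j ∈ univ.erase i, a j) (htee : ∀ i j, i ≠ j → a i = 1 → a j ≠ 0) :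
    2 * ∑ i, a i ≤ ∑ i, a i * ∑ j ∈ univ.erase i, a j := by
  have hsplit (i : Fin k) : a i + ∑ j ∈ univ.erase i, a j = ∑ j, a j :=
    add_sum_erase univ a (mem_univ i)
  have hle (i : Fin k) (hi : a i ≠ 0) : ∑ j, a j ≤ a i + a i * ∑ j ∈ univ.erase i, a j := by
    rw [← hsplit i]
    exact Nat.add_le_add_left (Nat.le_mul_of_pos_left _ (Nat.pos_of_ne_zero hi)) _
  by_cases hpos : ∀ i, a i ≠ 0
  · have htotal := card_nsmul_le_sum univ _ _ fun i _ => hle i (hpos i)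
    simp only [sum_add_distrib, card_univ, Fintype.card_fin, hk, smul_eq_mul] at htotal
    omega
  · push Not at hpos
    obtain ⟨l, hl⟩ := hpos
    obtain ⟨i, hli⟩ : ∃ i, l ≠ i := by subst hk; clear hl; revert l; decide
    obtain ⟨j, hlj, hij, huniv⟩ := exists_univ_eq_of_size_three hk hli
    have hsum (f : Fin k → ℕ) : ∑ m, f m = f l + (f i + f j) := by
      rw [huniv, sum_insert (by simp [hli, hlj]), sum_pair hij]
    have hi : ∑ m ∈ univ.erase i, a m = a j := by linarith [hsplit i, hsum a]
    have hj : ∑ m ∈ univ.erase j, a m = a i := by linarith [hsplit j, hsum a]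
    have hai : 2 ≤ a i := by grind
    have haj : 2 ≤ a j := by grind
    rw [hsum, hsum, hl, hi, hj]
    nlinarith

namespace CactusBlock
variable {V : Type*} {G : SimpleGraph V} [Fintype V] (B : CactusBlock G)

/-- All branches of the block but one are trivial. -/
def IsStar : Prop := ∃ i, ∀ j, j ≠ i → B.extra j = 0

/-- The block is a triangle whose branches are one pendent edge, one trivial branch, and the rest
of the graph. -/
def IsTee : Prop := B.size = 3 ∧ ∃ i j, i ≠ j ∧ B.extra i = 1 ∧ B.extra j = 0

/-- The excess of a triangle of type `IsTee`. -/
noncomputable def teeExcess (G : SimpleGraph V) : ℝ :=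
  (8 * Fintype.card V - 36 + 4 * cyclomaticNumber G) / 3

/-- The number of extra vertices outside the branch at `i`. -/
noncomputable def extraOutside (i : Fin B.size) : ℕ := ∑ j ∈ univ.erase i, B.extra j

lemma extra_add_extraOutside (i : Fin B.size) :
    (B.extra i : ℝ) + B.extraOutside i = Fintype.card V - B.size := by
  rw [← sum_extra_eq_sub, ← add_sum_erase univ (fun j => (B.extra j : ℝ)) (mem_univ i),
    extraOutside, Nat.cast_sum]

variable {B}

lemma extraOutside_pos (hstar : ¬ B.IsStar) (i : Fin B.size) : 0 < B.extraOutside i := by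
  contrapose! hstar
  refine ⟨i, fun j hj => ?_⟩
  have hzero : ∑ j ∈ univ.erase i, B.extra j = 0 := Nat.le_zero.mp hstar
  exact sum_eq_zero_iff.mp hzero j (mem_erase.mpr ⟨hj, mem_univ j⟩)

lemma two_mul_le_sum_extra_mul_extraOutside (hstar : ¬ B.IsStar) :
    2 * ((Fintype.card V : ℝ) - B.size - 1) ≤ ∑ i, (B.extra i : ℝ) * B.extraOutside i := by
  have hlarge (i : Fin B.size) (hi : B.extra i ≠ 0) :
      (Fintype.card V : ℝ) - B.size - 1 ≤ B.extra i * B.extraOutside i := by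
    have hextra : (1 : ℝ) ≤ B.extra i := by exact_mod_cast Nat.pos_of_ne_zero hi
    have houtside : (1 : ℝ) ≤ B.extraOutside i := by exact_mod_cast extraOutside_pos hstar i
    nlinarith [B.extra_add_extraOutside i]
  have hexists (i : Fin B.size) : ∃ j, j ≠ i ∧ B.extra j ≠ 0 := by
    by_contra! hcon
    exact hstar ⟨i, hcon⟩
  obtain ⟨j, -, hj⟩ := hexists ⟨0, by have := B.two_le_size; omega⟩
  obtain ⟨l, hlj, hl⟩ := hexists j
  have hpair := sum_le_sum_of_subset_of_nonneg (subset_univ {l, j})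
    fun i _ _ => (by positivity : (0 : ℝ) ≤ B.extra i * B.extraOutside i)
  rw [sum_pair hlj] at hpair
  linarith [hlarge j hj, hlarge l hl]

lemma interaction_eq_sum_erase : B.interaction = ∑ i, 2 * (B.extra i + B.branchCycles i) *
    ∑ j ∈ univ.erase i, B.extra j * cycleResistance B.size i j := by
  refine sum_congr rfl fun i _ => ?_
  simp only [mul_assoc, ← mul_sum]
  rw [← add_sum_erase univ _ (mem_univ i), cycleResistance_self, mul_zero, zero_add]

lemma interaction_nonneg (hG : G.Connected) : 0 ≤ B.interaction := by
  refine sum_nonneg fun i _ => sum_nonneg fun j _ => ?_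
  have := B.branchCycles_nonneg hG i
  have := cycleResistance_nonneg i j
  positivity

lemma interaction_eq_zero (hG : G.Connected) (hstar : B.IsStar) : B.interaction = 0 := by
  obtain ⟨i, hi⟩ := hstar
  rw [interaction_eq_sum_erase]
  refine sum_eq_zero fun j _ => ?_
  rcases eq_or_ne j i with rfl | hj
  · rw [sum_eq_zero fun l hl => by rw [hi l (ne_of_mem_erase hl), Nat.cast_zero, zero_mul],
      mul_zero]
  · rw [branchCycles_eq_zero_of_extra_le_one B hG (by simp [hi j hj]), hi j hj]
    simp

lemma le_interaction (hG : G.Connected) (hstar : ¬ B.IsStar) {μ : ℝ} (hμ : 0 ≤ μ)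
    (hle : ∀ i j, i ≠ j → μ ≤ cycleResistance B.size i j) :
    2 * μ * (∑ i, (B.extra i : ℝ) * B.extraOutside i + ∑ i, B.branchCycles i) ≤
      B.interaction := by
  rw [interaction_eq_sum_erase, ← sum_add_distrib, mul_sum]
  refine sum_le_sum fun i _ => ?_
  have hs := B.branchCycles_nonneg hG i
  have houtside : (1 : ℝ) ≤ B.extraOutside i := by exact_mod_cast extraOutside_pos hstar i
  have hsum : μ * B.extraOutside i ≤
      ∑ j ∈ univ.erase i, (B.extra j : ℝ) * cycleResistance B.size i j := by
    rw [extraOutside, Nat.cast_sum, mul_sum]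
    refine sum_le_sum fun j hj => ?_
    rw [mul_comm]
    exact mul_le_mul_of_nonneg_left (hle i j (ne_of_mem_erase hj).symm) (by positivity)
  calc 2 * μ * (B.extra i * B.extraOutside i + B.branchCycles i)
      ≤ 2 * μ * (B.extra i * B.extraOutside i + B.branchCycles i * B.extraOutside i) := by
        gcongr
        exact le_mul_of_one_le_right hs houtside
    _ = 2 * (B.extra i + B.branchCycles i) * (μ * B.extraOutside i) := by ring
    _ ≤ _ := by gcongr

lemma two_mul_le_sum_extra_mul_extraOutside_of_size_three (hsize : B.size = 3)
    (hstar : ¬ B.IsStar) (htee : ¬ B.IsTee) :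
    2 * ((Fintype.card V : ℝ) - 3) ≤ ∑ i, (B.extra i : ℝ) * B.extraOutside i := by
  have hle := two_mul_sum_le_sum_mul_sum_erase hsize (extraOutside_pos hstar)
    fun i j hij hi hj => htee ⟨hsize, i, j, hij, hi, hj⟩
  have hcard : (Fintype.card V : ℝ) - 3 = ∑ i, (B.extra i : ℝ) := by
    rw [sum_extra_eq_sub, hsize, Nat.cast_ofNat]
  rw [hcard]
  exact_mod_cast hle

lemma interaction_of_isTee (hG : G.Connected) (htee : B.IsTee) :
    B.interaction = teeExcess G := by
  obtain ⟨hsize, i, j, hij, hi, hj⟩ := htee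
  obtain ⟨l, hil, hjl, huniv⟩ := exists_univ_eq_of_size_three hsize hij
  have hsum (f : Fin B.size → ℝ) : ∑ m, f m = f i + f j + f l := by
    rw [huniv, sum_insert (by simp [hij, hil]), sum_pair hjl, add_assoc]
  have hcard := B.sum_extra_eq_sub
  have hcycles := B.sum_branchCycles
  have hsi := branchCycles_eq_zero_of_extra_le_one B hG hi.le
  have hsj := branchCycles_eq_zero_of_extra_le_one B hG (hj.trans_le zero_le_one)
  rw [hsum, hi, hj, hsize] at hcard
  rw [hsum, hsi, hsj, if_neg (by omega)] at hcycles
  simp only [interaction, hsum, hi, hj, hsi, hsj, cycleResistance_self,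
    cycleResistance_of_size_three hsize hil, cycleResistance_of_size_three hsize hil.symm,
    teeExcess]
  push_cast at hcard ⊢
  linarith

lemma starExcess_of_le_three {k : ℕ} (hk : 2 ≤ k) (hk' : k ≤ 3) : starExcess G k = 0 := by
  interval_cases k
  · rw [starExcess, if_pos rfl]
  · norm_num [starExcess, trianglePrice]
    ring

lemma starExcess_four :
    starExcess G 4 = (5 * Fintype.card V - 31 + cyclomaticNumber G) / 3 := by
  norm_num [starExcess, trianglePrice, pendentPrice]
  ring

lemma teeExcess_lt_starExcess (hG : G.Connected) {k : ℕ} (hk : 5 ≤ k) (hkV : k ≤ Fintype.card V)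
    (hV : 24 ≤ Fintype.card V) : teeExcess G < starExcess G k := by
  have hτ := cyclomaticNumber_nonneg hG
  have hk' : (5 : ℝ) ≤ k := by exact_mod_cast hk
  have hkV' : (k : ℝ) ≤ Fintype.card V := by exact_mod_cast hkV
  have hV' : (24 : ℝ) ≤ Fintype.card V := by exact_mod_cast hV
  have hn : 0 ≤ (2 * (k : ℝ) ^ 2 - 9 * k + 1) * (2 * Fintype.card V - (k + 24)) :=
    mul_nonneg (by nlinarith) (by linarith)
  have ht : 0 ≤ ((k : ℝ) - 1) * (k - 5) * cyclomaticNumber G :=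
    mul_nonneg (mul_nonneg (by linarith) (by linarith)) hτ
  rw [starExcess, if_neg (by omega), teeExcess, trianglePrice, pendentPrice]
  nlinarith

variable (B)

lemma size_le_card : B.size ≤ Fintype.card V :=
  B.sum_extra ▸ Nat.le_add_left _ _

variable {B}

lemma excess_eq_zero (hG : G.Connected) (hsize : B.size ≤ 3) (hstar : B.IsStar) :
    B.excess = 0 := by
  rw [excess_eq, starExcess_of_le_three B.two_le_size hsize, interaction_eq_zero hG hstar, add_zero]

lemma excess_of_isStar_of_size_four (hG : G.Connected) (hsize : B.size = 4) (hstar : B.IsStar) :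
    B.excess = (5 * Fintype.card V - 31 + cyclomaticNumber G) / 3 := by
  rw [excess_eq, hsize, starExcess_four, interaction_eq_zero hG hstar, add_zero]

lemma excess_of_isTee (hG : G.Connected) (htee : B.IsTee) : B.excess = teeExcess G := by
  rw [excess_eq, starExcess_of_le_three B.two_le_size htee.1.le, interaction_of_isTee hG htee,
    zero_add]

lemma teeExcess_lt_excess (hG : G.Connected) (hV : 24 ≤ Fintype.card V)
    (hstar : ¬ (B.size ≤ 4 ∧ B.IsStar)) (htee : ¬ B.IsTee) : teeExcess G < B.excess := by
  have hτ := cyclomaticNumber_nonneg hG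
  have hV' : (24 : ℝ) ≤ Fintype.card V := by exact_mod_cast hV
  have hcycles := B.sum_branchCycles
  rw [excess_eq]
  rcases le_or_gt 5 B.size with hsize | hsize
  · linarith [teeExcess_lt_starExcess hG hsize B.size_le_card hV, interaction_nonneg (B := B) hG]
  replace hstar : ¬ B.IsStar := fun h => hstar ⟨by omega, h⟩
  have hweak := two_mul_le_sum_extra_mul_extraOutside hstar
  have hcases : B.size = 2 ∨ B.size = 3 ∨ B.size = 4 := by have := B.two_le_size; omega
  unfold teeExcess
  rcases hcases with hsize | hsize | hsize <;> norm_num [hsize] at hweak hcycles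
  · have := le_interaction hG hstar zero_le_one fun i j hij =>
      (cycleResistance_of_size_two hsize hij).ge
    rw [hsize, starExcess_of_le_three le_rfl (by norm_num)]
    linarith
  · have hstrong := two_mul_le_sum_extra_mul_extraOutside_of_size_three hsize hstar htee
    have := le_interaction hG hstar (μ := 2 / 3) (by norm_num) fun i j hij =>
      (cycleResistance_of_size_three hsize hij).ge
    rw [hsize, starExcess_of_le_three (by norm_num) le_rfl]
    linarith
  · have := le_interaction hG hstar (μ := 3 / 4) (by norm_num) fun i j hij =>
      le_cycleResistance_of_size_four hsize hij
    rw [hsize, starExcess_four]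
    linarith

lemma excess_nonneg (hG : G.Connected) (hV : 24 ≤ Fintype.card V) : 0 ≤ B.excess := by
  have hτ := cyclomaticNumber_nonneg hG
  have hV' : (24 : ℝ) ≤ Fintype.card V := by exact_mod_cast hV
  have htee : 0 ≤ teeExcess G := by unfold teeExcess; linarith
  by_cases hT : B.IsTee
  · exact (excess_of_isTee hG hT).ge.trans' htee
  by_cases hS : B.size ≤ 4 ∧ B.IsStar
  · rcases hS.1.lt_or_eq with hsize | hsize
    · exact (excess_eq_zero hG (by omega) hS.2).ge
    · rw [excess_of_isStar_of_size_four hG hsize hS.2]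
      linarith
  · exact htee.trans (teeExcess_lt_excess hG hV hS hT).le

end CactusBlock

section Existence
variable {V : Type*} {G : SimpleGraph V}

lemma exists_reachable_deleteEdges (hG : G.Connected) {E : Set (Sym2 V)} {s : Set V}
    (hs : s.Nonempty) (hE : ∀ e ∈ E, ∀ v ∈ e, v ∈ s) (w : V) :
    ∃ x ∈ s, (G.deleteEdges E).Reachable w x := by
  obtain ⟨x, hx⟩ := hs
  obtain ⟨p⟩ := hG.preconnected w x
  induction p with
  | nil => exact ⟨_, hx, .rfl⟩
  | @cons a b _ hadj _ ih =>
    by_cases hab : s(a, b) ∈ E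
    · exact ⟨a, hE _ hab a (Sym2.mem_mk_left a b), .rfl⟩
    · obtain ⟨y, hy, hreach⟩ := ih hx
      exact ⟨y, hy, (SimpleGraph.deleteEdges_adj.mpr ⟨hadj, hab⟩).reachable.trans hreach⟩

lemma exists_cactusBlock (hG : G.Connected) {k : ℕ} (hk : 2 ≤ k) {c : Fin k → V}
    {E : Set (Sym2 V)} (hE : E = Sym2.map c '' (SimpleGraph.cycleGraph k).edgeSet)
    (hEG : E ⊆ G.edgeSet) (hsep : ∀ i j, (G.deleteEdges E).Reachable (c i) (c j) → i = j) :
    ∃ B : CactusBlock G, B.size = k ∧ ∀ w z, G.Adj w z → (B.proj w ≠ B.proj z ↔ s(w, z) ∈ E) := by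
  have hmem {i j : Fin k} (hij : (SimpleGraph.cycleGraph k).Adj i j) : s(c i, c j) ∈ E :=
    hE ▸ ⟨s(i, j), hij, rfl⟩
  have hrange : ∀ e ∈ E, ∀ v ∈ e, v ∈ Set.range c := by
    rw [hE]
    rintro _ ⟨e, -, rfl⟩ v hv
    obtain ⟨i, -, rfl⟩ := Sym2.mem_map.mp hv
    exact ⟨i, rfl⟩
  have hproj (w : V) : ∃ i, (G.deleteEdges E).Reachable w (c i) := by
    obtain ⟨_, ⟨i, rfl⟩, hi⟩ :=
      exists_reachable_deleteEdges hG (s := Set.range c) ⟨_, ⟨0, by omega⟩, rfl⟩ hrange w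
    exact ⟨i, hi⟩
  choose proj hproj using hproj
  have hproj_eq {w : V} {i : Fin k} (h : (G.deleteEdges E).Reachable w (c i)) : proj w = i :=
    hsep _ _ ((hproj w).symm.trans h)
  have hproj_c (i : Fin k) : proj (c i) = i := hproj_eq .rfl
  have hcross {w z : V} (hwz : s(w, z) ∈ E) : c (proj w) = w ∧ c (proj z) = z ∧
      (SimpleGraph.cycleGraph k).Adj (proj w) (proj z) := by
    rw [hE] at hwz
    obtain ⟨⟨i, j⟩, hij, heq⟩ := hwz
    change (SimpleGraph.cycleGraph k).Adj i j at hij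
    rcases Sym2.eq_iff.mp heq with ⟨rfl, rfl⟩ | ⟨rfl, rfl⟩
    · simpa only [hproj_c, true_and] using hij
    · simpa only [hproj_c, true_and] using hij.symm
  have hne {w z : V} (hwz : G.Adj w z) (h : proj w ≠ proj z) : s(w, z) ∈ E := by
    contrapose! h
    exact hproj_eq ((SimpleGraph.deleteEdges_adj.mpr ⟨hwz, h⟩).reachable.trans (hproj z))
  exact ⟨⟨k, hk, c, proj, hproj_c, fun h => hEG (hmem h), fun hwz h => hcross (hne hwz h)⟩, rfl,
    fun w z hwz => ⟨hne hwz, fun h => (hcross h).2.2.ne⟩⟩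

lemma exists_cactusBlock_of_isBridge (hG : G.Connected) {e : Sym2 V} (he : e ∈ G.edgeSet)
    (hbridge : G.IsBridge e) : ∃ B : CactusBlock G,
      B.size = 2 ∧ ∀ w z, G.Adj w z → (B.proj w ≠ B.proj z ↔ s(w, z) = e) := by
  induction e with | h a b
  rw [SimpleGraph.isBridge_iff] at hbridge
  refine exists_cactusBlock hG (c := ![a, b]) (E := {s(a, b)}) le_rfl ?_ (by simpa using he) ?_
  · refine Set.Subset.antisymm ?_ ?_
    · rintro _ rfl
      exact ⟨s(0, 1), by simp [SimpleGraph.cycleGraph_two_eq_top], rfl⟩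
    · rintro _ ⟨⟨i, j⟩, hij, rfl⟩
      fin_cases i <;> fin_cases j <;> simp_all
  · intro i j hreach
    fin_cases i <;> fin_cases j
    · rfl
    · exact absurd hreach hbridge
    · exact absurd hreach.symm hbridge
    · rfl

lemma cycleGraph_adj_iff_mod {k : ℕ} (hk : 2 ≤ k) (i j : Fin k) :
    (SimpleGraph.cycleGraph k).Adj i j ↔ (i.val + 1) % k = j.val ∨ (j.val + 1) % k = i.val := by
  obtain ⟨m, rfl⟩ := Nat.exists_eq_add_of_le' hk
  rw [SimpleGraph.cycleGraph_adj, sub_eq_iff_eq_add', sub_eq_iff_eq_add', Fin.ext_iff,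
    Fin.ext_iff, Fin.val_add, Fin.val_add, Fin.val_one, or_comm, eq_comm (a := j.val),
    eq_comm (a := i.val)]

section Walk
variable {v : V} {p : G.Walk v v}

lemma getVert_succ_mod {i : ℕ} (hi : i < p.length) :
    p.getVert ((i + 1) % p.length) = p.getVert (i + 1) := by
  rcases (Nat.succ_le_of_lt hi).lt_or_eq with h | h
  · rw [Nat.mod_eq_of_lt h]
  · rw [Nat.succ_eq_add_one] at h
    rw [h, Nat.mod_self, p.getVert_zero, p.getVert_length]

lemma edges_eq_image_cycleGraph (hp : 2 ≤ p.length) :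
    {e | e ∈ p.edges} = Sym2.map (fun i : Fin p.length => p.getVert i) ''
      (SimpleGraph.cycleGraph p.length).edgeSet := by
  ext e
  induction e with | h a b
  rw [Set.mem_ofPred_eq, SimpleGraph.Walk.mk_mem_edges_iff_exists]
  constructor
  · rintro ⟨i, hi, he⟩
    refine ⟨s(⟨i, hi⟩, ⟨(i + 1) % p.length, Nat.mod_lt _ (by omega)⟩), ?_, ?_⟩
    · exact (cycleGraph_adj_iff_mod hp _ _).mpr (.inl rfl)
    · rw [Sym2.map_mk, getVert_succ_mod hi, he]
  · rintro ⟨⟨i, j⟩, hij, he⟩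
    change s(p.getVert i, p.getVert j) = s(a, b) at he
    rcases (cycleGraph_adj_iff_mod hp i j).mp hij with h | h
    · exact ⟨i, i.2, by rw [← he, ← h, getVert_succ_mod i.2]⟩
    · exact ⟨j, j.2, by rw [← he, Sym2.eq_swap, ← h, getVert_succ_mod j.2]⟩

lemma mk_getVert_succ_mem_edges {i : ℕ} (hi : i < p.length) :
    s(p.getVert i, p.getVert (i + 1)) ∈ p.edges :=
  p.mk_mem_edges_iff_exists.mpr ⟨i, hi, rfl⟩

lemma mk_getVert_succ_injOn (hp : p.IsTrail) :
    Set.InjOn (fun i => s(p.getVert i, p.getVert (i + 1))) {i | i < p.length} := by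
  intro i hi j hj hij
  have hi' : i < p.edges.length := by simpa using hi
  have hj' : j < p.edges.length := by simpa using hj
  simp only [← SimpleGraph.Walk.getElem_edges hi', ← SimpleGraph.Walk.getElem_edges hj'] at hij
  exact (List.Nodup.getElem_inj_iff hp.edges_nodup).mp hij

lemma isCycleSubgraph_toSubgraph (hp : p.IsCycle) : IsCycleSubgraph p.toSubgraph :=
  ⟨p.toSubgraph_connected.coe, fun _ hw =>
    hp.ncard_neighborSet_toSubgraph_eq_two (p.mem_verts_toSubgraph.mp hw)⟩

end Walk

namespace IsCactus
variable [Finite V]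

lemma eq_of_adj {H₁ H₂ : G.Subgraph} (hG : IsCactus G) (h₁ : IsCycleSubgraph H₁)
    (h₂ : IsCycleSubgraph H₂) {a b : V} (hab₁ : H₁.Adj a b) (hab₂ : H₂.Adj a b) : H₁ = H₂ := by
  by_contra hne
  have hcard := hG.2 H₁ H₂ h₁ h₂ hne
  rw [Set.ncard_le_one (Set.toFinite _)] at hcard
  exact hab₁.ne (hcard a ⟨H₁.edge_vert hab₁, H₂.edge_vert hab₂⟩
    b ⟨H₁.edge_vert hab₁.symm, H₂.edge_vert hab₂.symm⟩)

lemma exists_isCycle_toSubgraph_eq (hG : IsCactus G) {H : G.Subgraph} (hH : IsCycleSubgraph H) :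
    ∃ (v : V) (p : G.Walk v v), p.IsCycle ∧ p.toSubgraph = H := by
  have := Fintype.ofFinite V
  have hcycles : H.spanningCoe.IsCycles := fun w ⟨u, hu⟩ => hH.2 w (H.edge_vert hu)
  obtain ⟨v, hv⟩ := hH.1.nonempty
  have hnonempty : (H.spanningCoe.neighborSet v).Nonempty :=
    Set.nonempty_of_ncard_ne_zero ((hH.2 v hv).trans_ne two_ne_zero)
  obtain ⟨p, hp, -⟩ := hcycles.exists_cycle_toSubgraph_verts_eq_connectedComponentSupp
    (c := H.spanningCoe.connectedComponentMk v) rfl hnonempty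
  have hp' := hp.mapLe H.spanningCoe_le
  have hlength : 0 < p.length := by have := hp.three_le_length; omega
  have hadj : H.Adj (p.getVert 0) (p.getVert 1) := p.adj_getVert_succ hlength
  refine ⟨v, p.mapLe H.spanningCoe_le, hp', hG.eq_of_adj (isCycleSubgraph_toSubgraph hp') hH
    (a := p.getVert 0) (b := p.getVert 1) ?_ hadj⟩
  rw [← SimpleGraph.Subgraph.mem_edgeSet, SimpleGraph.Walk.mem_edges_toSubgraph,
    SimpleGraph.Walk.edges_mapLe_eq_edges]
  exact mk_getVert_succ_mem_edges hlength

lemma isBridge_deleteEdges_singleton (hG : IsCactus G) {v : V} {p : G.Walk v v} (hp : p.IsCycle)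
    {e f : Sym2 V} (he : e ∈ p.edges) (hf : f ∈ p.edges) (hef : e ≠ f) :
    (G.deleteEdges {f}).IsBridge e := by
  rw [SimpleGraph.isBridge_iff_forall_cycle_notMem]
  · intro u q hq heq
    have hq' := hq.mapLe (SimpleGraph.deleteEdges_le (G := G) {f})
    have heq' : e ∈ (q.mapLe (SimpleGraph.deleteEdges_le (G := G) {f})).edges := by
      rwa [SimpleGraph.Walk.edges_mapLe_eq_edges]
    have hsub :
        p.toSubgraph = (q.mapLe (SimpleGraph.deleteEdges_le (G := G) {f})).toSubgraph := by
      induction e with | h a b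
      exact hG.eq_of_adj (isCycleSubgraph_toSubgraph hp) (isCycleSubgraph_toSubgraph hq')
        (p.mem_edges_toSubgraph.mpr he) (SimpleGraph.Walk.mem_edges_toSubgraph _ |>.mpr heq')
    rw [← p.mem_edges_toSubgraph, hsub, SimpleGraph.Walk.mem_edges_toSubgraph,
      SimpleGraph.Walk.edges_mapLe_eq_edges] at hf
    have hf' := q.edges_subset_edgeSet hf
    simp at hf'
  · simpa [hef] using p.edges_subset_edgeSet he

lemma not_reachable_deleteEdges_edges (hG : IsCactus G) {v : V} {p : G.Walk v v} (hp : p.IsCycle)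
    {i j : ℕ} (hij : i < j) (hj : j < p.length) :
    ¬ (G.deleteEdges {e | e ∈ p.edges}).Reachable (p.getVert i) (p.getVert j) := by
  intro hreach
  have hinj := mk_getVert_succ_injOn hp.isTrail
  set edge : ℕ → Sym2 V := fun m => s(p.getVert m, p.getVert (m + 1)) with hedge
  have hi : i < p.length := hij.trans hj
  have hmem {m : ℕ} (hm : m < p.length) : edge m ∈ p.edges := mk_getVert_succ_mem_edges hm
  have hbridge : (G.deleteEdges {edge j}).IsBridge (edge i) :=
    hG.isBridge_deleteEdges_singleton hp (hmem hi) (hmem hj) fun h => hij.ne (hinj hi hj h)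
  have harc (m : ℕ) (him : i + 1 ≤ m) (hmj : m ≤ j) :
      (G.deleteEdges ({edge j} ∪ {edge i})).Reachable (p.getVert (i + 1)) (p.getVert m) := by
    induction m, him using Nat.le_induction with
    | base => rfl
    | succ m him ih =>
      refine (ih (by omega)).trans (SimpleGraph.Adj.reachable ?_)
      refine SimpleGraph.deleteEdges_adj.mpr ⟨p.adj_getVert_succ (by omega), ?_⟩
      rintro (h | h)
      · exact absurd (hinj (by grind) hj h) (by omega)
      · exact absurd (hinj (by grind) hi h) (by omega)
  rw [hedge, SimpleGraph.isBridge_iff, SimpleGraph.deleteEdges_deleteEdges] at hbridge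
  refine hbridge ((hreach.mono (SimpleGraph.deleteEdges_anti ?_)).trans (harc j hij le_rfl).symm)
  rintro _ (rfl | rfl)
  exacts [hmem hj, hmem hi]

lemma exists_cactusBlock_of_isCycleSubgraph (hG : IsCactus G) {H : G.Subgraph}
    (hH : IsCycleSubgraph H) : ∃ B : CactusBlock G,
      B.size ≠ 2 ∧ ∀ w z, G.Adj w z → (B.proj w ≠ B.proj z ↔ H.Adj w z) := by
  obtain ⟨v, p, hp, rfl⟩ := hG.exists_isCycle_toSubgraph_eq hH
  have hlength := hp.three_le_length
  have hsep (i j : Fin p.length) (hreach :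
      (G.deleteEdges {e | e ∈ p.edges}).Reachable (p.getVert i) (p.getVert j)) : i = j := by
    by_contra hij
    rcases lt_or_gt_of_ne hij with h | h
    · exact hG.not_reachable_deleteEdges_edges hp h j.2 hreach
    · exact hG.not_reachable_deleteEdges_edges hp h i.2 hreach.symm
  obtain ⟨B, hsize, hB⟩ := exists_cactusBlock hG.1 (by omega)
    (edges_eq_image_cycleGraph (p := p) (by omega)) (fun _ he => p.edges_subset_edgeSet he) hsep
  exact ⟨B, by omega, fun w z hwz => (hB w z hwz).trans p.mem_edges_toSubgraph.symm⟩

end IsCactus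
end Existence

theorem IsCactus.exists_isBlockDecomposition.{u} {V : Type u} [Finite V] {G : SimpleGraph V}
    (hG : IsCactus G) : ∃ (β : Type u) (_ : Fintype β) (B : β → CactusBlock G),
      IsBlockDecomposition B ∧ #{b | (B b).size ≠ 2} = numCycles G := by
  choose cycle hcycle_size hcycle using fun H : {H : G.Subgraph // IsCycleSubgraph H} =>
    hG.exists_cactusBlock_of_isCycleSubgraph H.2
  choose bridge hbridge_size hbridge using fun e : {e // e ∈ G.edgeSet ∧ G.IsBridge e} =>
    exists_cactusBlock_of_isBridge hG.1 e.2.1 e.2.2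
  have := Fintype.ofFinite {H : G.Subgraph // IsCycleSubgraph H}
  have := Fintype.ofFinite {e // e ∈ G.edgeSet ∧ G.IsBridge e}
  refine ⟨_, inferInstance, Sum.elim cycle bridge, fun w z hwz => ?_, ?_⟩
  · by_cases hb : G.IsBridge s(w, z)
    · refine ⟨.inr ⟨s(w, z), hwz, hb⟩, (hbridge _ w z hwz).mpr rfl, ?_⟩
      rintro (⟨H, hH⟩ | ⟨e, he⟩) hcross
      · obtain ⟨v, p, hp, rfl⟩ := hG.exists_isCycle_toSubgraph_eq hH
        exact absurd (p.mem_edges_toSubgraph.mp ((hcycle _ w z hwz).mp hcross))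
          (hb.notMem_edges_of_isCycle hp)
      · obtain rfl : s(w, z) = e := (hbridge _ w z hwz).mp hcross
        rfl
    · obtain ⟨v, p, hp, hpe⟩ : ∃ v, ∃ p : G.Walk v v, p.IsCycle ∧ s(w, z) ∈ p.edges := by
        rw [SimpleGraph.isBridge_iff_forall_cycle_notMem hwz] at hb
        push Not at hb
        exact hb
      have hadj : p.toSubgraph.Adj w z := p.mem_edges_toSubgraph.mpr hpe
      refine ⟨.inl ⟨_, isCycleSubgraph_toSubgraph hp⟩, (hcycle _ w z hwz).mpr hadj, ?_⟩
      rintro (⟨H, hH⟩ | ⟨e, he⟩) hcross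
      · rw [Sum.inl.injEq, Subtype.mk.injEq]
        exact hG.eq_of_adj hH (isCycleSubgraph_toSubgraph hp) ((hcycle _ w z hwz).mp hcross) hadj
      · obtain rfl : s(w, z) = e := (hbridge _ w z hwz).mp hcross
        exact absurd he.2 hb
  · have hfilter : ({b | (Sum.elim cycle bridge b).size ≠ 2} : Finset _) =
        univ.map Function.Embedding.inl := by
      ext (H | e) <;> simp [hcycle_size, hbridge_size]
    rw [hfilter, card_map, card_univ, ← Nat.card_eq_fintype_card]
    rfl

section Matching
variable {V W : Type*} [Fintype V] [Fintype W] {G : SimpleGraph V} {H : SimpleGraph W}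

lemma exists_perm_adj_iff (hG : ∀ v, (G.neighborSet v).Subsingleton) :
    ∃ σ : Equiv.Perm V, σ ^ 2 = 1 ∧ ∀ v w, G.Adj v w ↔ σ v = w ∧ v ≠ w := by
  have hpartner (v : V) : ∃ w, (∀ x, G.Adj v x ↔ w = x ∧ v ≠ x) := by
    by_cases hv : ∃ w, G.Adj v w
    · obtain ⟨w, hw⟩ := hv
      exact ⟨w, fun x => ⟨fun hx => ⟨hG v hw hx, hx.ne⟩, fun h => h.1 ▸ hw⟩⟩
    · push Not at hv
      exact ⟨v, fun x => ⟨fun hx => absurd hx (hv x), fun h => absurd h.1 h.2⟩⟩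
  choose f hf using hpartner
  have hinv : Function.Involutive f := by
    intro v
    by_cases hv : v = f v
    · rw [← hv, ← hv]
    · exact ((hf (f v) v).mp ((hf v (f v)).mpr ⟨rfl, hv⟩).symm).1
  refine ⟨hinv.toPerm, ?_, hf⟩
  ext v
  rw [sq, Equiv.Perm.mul_apply, Equiv.Perm.one_apply]
  exact hinv v

lemma isConj_of_sq_eq_one {σ τ : Equiv.Perm V} (hσ : σ ^ 2 = 1) (hτ : τ ^ 2 = 1)
    (hsupport : #σ.support = #τ.support) : IsConj σ τ := by
  have hcard := hsupport
  rw [Equiv.Perm.isConj_iff_cycleType_eq, Equiv.Perm.cycleType_of_pow_prime_eq_one hσ,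
    Equiv.Perm.cycleType_of_pow_prime_eq_one hτ]
  rw [← Equiv.Perm.sum_cycleType, ← Equiv.Perm.sum_cycleType,
    Equiv.Perm.cycleType_of_pow_prime_eq_one hσ, Equiv.Perm.cycleType_of_pow_prime_eq_one hτ,
    Multiset.sum_replicate, Multiset.sum_replicate, smul_eq_mul, smul_eq_mul] at hcard
  congr 1
  omega

lemma nonempty_iso_of_subsingleton_neighborSet (hG : ∀ v, (G.neighborSet v).Subsingleton)
    (hH : ∀ w, (H.neighborSet w).Subsingleton) (hcard : Fintype.card V = Fintype.card W)
    (hsupport : G.support.ncard = H.support.ncard) : Nonempty (G ≃g H) := by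
  obtain ⟨σ, hσ, hGσ⟩ := exists_perm_adj_iff hG
  obtain ⟨τ, hτ, hHτ⟩ := exists_perm_adj_iff hH
  have hσsupport : G.support = σ.support := by
    ext v
    simp [SimpleGraph.mem_support, hGσ, eq_comm]
  have hτsupport : H.support = τ.support := by
    ext w
    simp [SimpleGraph.mem_support, hHτ, eq_comm]
  let e := Fintype.equivOfCardEq hcard
  have hτ' : (e.symm.permCongr τ) ^ 2 = 1 := by
    ext v
    simpa [sq] using congrArg (fun f => e.symm (f (e v))) hτ
  have hsupport_conj : (e.symm.permCongr τ).support = τ.support.map e.symm.toEmbedding := by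
    ext v
    simp [e.symm_apply_eq]
  have hcard' : #σ.support = #(e.symm.permCongr τ).support := by
    rw [hsupport_conj, card_map, ← Set.ncard_coe_finset, ← Set.ncard_coe_finset, ← hσsupport,
      hsupport, hτsupport]
  obtain ⟨π, hπ⟩ := isConj_iff.mp (isConj_of_sq_eq_one hσ hτ' hcard')
  have hconj (v : V) : τ (e (π v)) = e (π (σ v)) := by
    have := congrArg (fun f => e (f (π v))) hπ
    simpa using this.symm
  refine ⟨⟨π.trans e, fun {v w} => ?_⟩⟩
  simp [hGσ, hHτ, hconj]

end Matching

section Windmill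
variable {κ V W : Type*} {K : SimpleGraph κ} {G : SimpleGraph V} {H : SimpleGraph W}

/-- `G` arises from the graph `K`, embedded by `c`, by attaching triangles and pendent edges at the
vertex `h` of `K`: the vertices outside the core `K` are adjacent to `h` but to no other core
vertex, and each of them has at most one neighbour outside the core. -/
structure IsWindmill (c : K ↪g G) (h : κ) : Prop where
  adj_core_iff : ∀ w ∉ Set.range c, ∀ i, G.Adj w (c i) ↔ i = h
  subsingleton_neighborSet : ∀ w, ((G.induce (Set.range c)ᶜ).neighborSet w).Subsingleton

/-- The decomposition of the vertices of `G` into those of an induced subgraph and the others. -/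
noncomputable def coreEquiv (c : K ↪g G) : κ ⊕ ↥(Set.range c)ᶜ ≃ V :=
  ((Equiv.ofInjective c c.injective).sumCongr (Equiv.refl _)).trans
    (Equiv.Set.sumCompl (Set.range c))

lemma sum_eq_sum_core_add [Fintype κ] [Fintype V] (c : K ↪g G) (f : V → ℝ) :
    ∑ v, f v = ∑ i, f (c i) + ∑ w : ↥(Set.range c)ᶜ, f w :=
  ((coreEquiv c).sum_comp f).symm.trans (Fintype.sum_sum_type _)

lemma sum_degree_eq_ncard_support [Fintype V] [DecidableRel G.Adj]
    (hG : ∀ v, (G.neighborSet v).Subsingleton) :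
    ∑ v, G.degree v = G.support.ncard := by
  have hsupport : G.support = ({v | ∃ w, G.Adj v w} : Finset V) := by
    ext v
    simp [SimpleGraph.mem_support]
  rw [hsupport, Set.ncard_coe_finset, card_filter]
  refine sum_congr rfl fun v _ => ?_
  split_ifs with hv
  · obtain ⟨w, hw⟩ := hv
    exact SimpleGraph.degree_eq_one_iff_existsUnique_adj.mpr ⟨w, hw, fun x hx => hG v hx hw⟩
  · rw [← SimpleGraph.card_neighborFinset_eq_degree, card_eq_zero, eq_empty_iff_forall_notMem]
    exact fun w hw => hv ⟨w, by simpa using hw⟩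

namespace IsWindmill
variable {c : K ↪g G} {d : K ↪g H} {h : κ}

lemma core_adj_iff (hc : IsWindmill c h) (i : κ) (w : ↥(Set.range c)ᶜ) :
    G.Adj (c i) w ↔ i = h := by
  rw [SimpleGraph.adj_comm]
  exact hc.adj_core_iff w w.2 i

lemma cyclomaticNumber_eq [Fintype κ] [Fintype V] (hc : IsWindmill c h) :
    cyclomaticNumber G =
      cyclomaticNumber K + ((G.induce (Set.range c)ᶜ).support.ncard : ℝ) / 2 := by
  have hcard : (Fintype.card V : ℝ) = Fintype.card κ + Fintype.card ↥(Set.range c)ᶜ := by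
    rw [← Fintype.card_congr (coreEquiv c), Fintype.card_sum, Nat.cast_add]
  have hdegree_core (i : κ) : (G.degree (c i) : ℝ) =
      K.degree i + if i = h then (Fintype.card ↥(Set.range c)ᶜ : ℝ) else 0 := by
    rw [degree_eq_sum, sum_eq_sum_core_add c, degree_eq_sum]
    simp_rw [fun w : ↥(Set.range c)ᶜ => hc.core_adj_iff i w, c.map_adj_iff]
    split_ifs <;> simp
  have hdegree_compl (w : ↥(Set.range c)ᶜ) :
      (G.degree w : ℝ) = 1 + (G.induce (Set.range c)ᶜ).degree w := by
    rw [degree_eq_sum, sum_eq_sum_core_add c, degree_eq_sum]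
    simp [hc.adj_core_iff w w.2]
  have hdegree : ∑ v, (G.degree v : ℝ) = ∑ i, (K.degree i : ℝ) +
      2 * Fintype.card ↥(Set.range c)ᶜ + (G.induce (Set.range c)ᶜ).support.ncard := by
    rw [← sum_degree_eq_ncard_support hc.subsingleton_neighborSet, sum_eq_sum_core_add c]
    simp_rw [hdegree_core, hdegree_compl, sum_add_distrib]
    rw [sum_ite_eq' univ h, if_pos (mem_univ h), sum_const, card_univ, nsmul_eq_mul, mul_one]
    push_cast
    ring
  rw [sum_degree_eq, sum_degree_eq, hcard] at hdegree
  linarith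

lemma two_mul_cyclomaticNumber_add_card_le [Fintype κ] [Fintype V] (hc : IsWindmill c h) :
    2 * cyclomaticNumber G + Fintype.card κ ≤ 2 * cyclomaticNumber K + Fintype.card V := by
  have hsupport : (G.induce (Set.range c)ᶜ).support.ncard ≤ Fintype.card ↥(Set.range c)ᶜ := by
    rw [← Nat.card_eq_fintype_card]
    exact Set.ncard_le_card _
  have hcard := Fintype.card_congr (coreEquiv c)
  rw [Fintype.card_sum] at hcard
  rw [hc.cyclomaticNumber_eq, ← hcard]
  rify at hsupport
  push_cast
  linarith

theorem nonempty_iso [Fintype κ] [Fintype V] [Fintype W] (hc : IsWindmill c h)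
    (hd : IsWindmill d h) (hcard : Fintype.card V = Fintype.card W)
    (hcyc : cyclomaticNumber G = cyclomaticNumber H) : Nonempty (G ≃g H) := by
  rw [hc.cyclomaticNumber_eq, hd.cyclomaticNumber_eq] at hcyc
  have hsupport : (G.induce (Set.range c)ᶜ).support.ncard =
      (H.induce (Set.range d)ᶜ).support.ncard := by
    rify
    linarith
  have hcompl : Fintype.card ↥(Set.range c)ᶜ = Fintype.card ↥(Set.range d)ᶜ := by
    rw [← Fintype.card_congr (coreEquiv c), ← Fintype.card_congr (coreEquiv d), Fintype.card_sum,
      Fintype.card_sum] at hcard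
    omega
  obtain ⟨e⟩ := nonempty_iso_of_subsingleton_neighborSet hc.subsingleton_neighborSet
    hd.subsingleton_neighborSet hcompl hsupport
  have hadj (x y : κ ⊕ ↥(Set.range c)ᶜ) :
      H.Adj (coreEquiv d (x.map id e)) (coreEquiv d (y.map id e)) ↔
        G.Adj (coreEquiv c x) (coreEquiv c y) := by
    rcases x with i | w <;> rcases y with j | z
    · exact d.map_adj_iff.trans c.map_adj_iff.symm
    · exact (hd.core_adj_iff i (e z)).trans (hc.core_adj_iff i z).symm
    · exact (hd.adj_core_iff (e w) (e w).2 j).trans (hc.adj_core_iff w w.2 j).symm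
    · exact e.map_adj_iff
  refine ⟨⟨((coreEquiv c).symm.trans ((Equiv.refl κ).sumCongr e.toEquiv)).trans (coreEquiv d),
    fun {v w} => ?_⟩⟩
  have := hadj ((coreEquiv c).symm v) ((coreEquiv c).symm w)
  rwa [Equiv.apply_symm_apply, Equiv.apply_symm_apply] at this

end IsWindmill
end Windmill

section Families
variable {n t : ℕ}

lemma G0_adj_iff (a b : Fin n) : (G0 n t).Adj a b ↔ a.val ≠ b.val ∧
    ((a.val = 0 ∨ a.val % 2 = 1 ∧ b.val = a.val + 1 ∧ b.val ≤ 2 * t) ∨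
      (b.val = 0 ∨ b.val % 2 = 1 ∧ a.val = b.val + 1 ∧ a.val ≤ 2 * t)) := by
  simp only [G0, SimpleGraph.fromRel_adj, Nat.odd_iff, Fin.ext_iff, ne_eq]

lemma G4g_adj_iff (a b : Fin n) : (G4g n t).Adj a b ↔ a.val ≠ b.val ∧
    ((a.val = 0 ∧ b.val ≠ 2 * t + 1 ∨ a.val % 2 = 1 ∧ b.val = a.val + 1 ∧ b.val ≤ 2 * t ∨
        a.val = 1 ∧ b.val = 2 * t + 1) ∨
      (b.val = 0 ∧ a.val ≠ 2 * t + 1 ∨ b.val % 2 = 1 ∧ a.val = b.val + 1 ∧ a.val ≤ 2 * t ∨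
        b.val = 1 ∧ a.val = 2 * t + 1)) := by
  simp only [G4g, SimpleGraph.fromRel_adj, Nat.odd_iff, Fin.ext_iff, ne_eq]

lemma G5g_adj_iff (a b : Fin n) : (G5g n t).Adj a b ↔ a.val ≠ b.val ∧
    ((a.val = 0 ∧ b.val ≠ 2 * t ∨ a.val % 2 = 1 ∧ b.val = a.val + 1 ∧ b.val ≤ 2 * t - 2 ∨
        a.val = 2 * t - 1 ∧ b.val = 2 * t ∨ a.val = 2 * t ∧ b.val = 2 * t + 1) ∨
      (b.val = 0 ∧ a.val ≠ 2 * t ∨ b.val % 2 = 1 ∧ a.val = b.val + 1 ∧ a.val ≤ 2 * t - 2 ∨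
        b.val = 2 * t - 1 ∧ a.val = 2 * t ∨ b.val = 2 * t ∧ a.val = 2 * t + 1)) := by
  simp only [G5g, SimpleGraph.fromRel_adj, Nat.odd_iff, Fin.ext_iff, ne_eq]

lemma cyclomaticNumber_cycleGraph {k : ℕ} (hk : 3 ≤ k) :
    cyclomaticNumber (SimpleGraph.cycleGraph k) = 1 := by
  have hsum := sum_degree_eq (SimpleGraph.cycleGraph k)
  obtain ⟨m, rfl⟩ := Nat.exists_eq_add_of_le' hk
  simp only [SimpleGraph.cycleGraph_degree_three_le, sum_const, card_univ, Fintype.card_fin,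
    nsmul_eq_mul] at hsum
  push_cast at hsum
  linarith

lemma cyclomaticNumber_G4g_four_one : cyclomaticNumber (G4g 4 1) = 1 := by
  have hsum := sum_degree_eq (G4g 4 1)
  simp_rw [degree_eq_sum, Fin.sum_univ_four, G4g_adj_iff] at hsum
  norm_num at hsum
  linarith

variable {κ : Type*} {K : SimpleGraph κ} {Γ : SimpleGraph (Fin n)} {d : K ↪g Γ} {h : κ}
  {m r : ℕ}

/-- A windmill on `Fin n` with core `d` and hub `d h`, in which the attached triangles are those
through the edges `{2i + 1, 2i + 2}` for `m ≤ i < m + r`. -/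
structure IsLabelledWindmill (d : K ↪g Γ) (h : κ) (m r : ℕ) : Prop where
  adj_core_iff : ∀ w ∉ Set.range d, ∀ i, Γ.Adj w (d i) ↔ i = h
  adj_iff : ∀ w ∉ Set.range d, ∀ x ∉ Set.range d, Γ.Adj w x ↔
    w.val % 2 = 1 ∧ x.val = w.val + 1 ∧ x.val ≤ 2 * (m + r) ∨
      x.val % 2 = 1 ∧ w.val = x.val + 1 ∧ w.val ≤ 2 * (m + r)
  notMem_iff : ∀ w : Fin n, w.val ≤ 2 * (m + r) → (w ∉ Set.range d ↔ 2 * m < w.val)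
  lt : 2 * (m + r) < n

namespace IsLabelledWindmill

lemma isWindmill (hd : IsLabelledWindmill d h m r) : IsWindmill d h := by
  refine ⟨hd.adj_core_iff, fun w x hx y hy => Subtype.ext (Fin.ext ?_)⟩
  have hx' := (hd.adj_iff w w.2 x x.2).mp hx
  have hy' := (hd.adj_iff w w.2 y y.2).mp hy
  omega

lemma image_support (hd : IsLabelledWindmill d h m r) :
    (fun w : ↥(Set.range d)ᶜ => w.val.val) '' (Γ.induce (Set.range d)ᶜ).support =
      Ioc (2 * m) (2 * (m + r)) := by
  have hmem {w : Fin n} (hlt : 2 * m < w.val) (hle : w.val ≤ 2 * (m + r)) : w ∉ Set.range d :=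
    (hd.notMem_iff w hle).mpr hlt
  ext v
  rw [coe_Ioc, Set.mem_Ioc]
  constructor
  · rintro ⟨⟨w, hw⟩, ⟨⟨x, hx⟩, hwx⟩, rfl⟩
    have hadj := (hd.adj_iff w hw x hx).mp hwx
    have hle : w.val ≤ 2 * (m + r) := by omega
    exact ⟨(hd.notMem_iff w hle).mp hw, hle⟩
  · rintro ⟨hlt, hle⟩
    have hlt_n := hd.lt
    have hw := hmem (w := ⟨v, hle.trans_lt hlt_n⟩) hlt hle
    rcases Nat.mod_two_eq_zero_or_one v with hv | hv
    · have hx := hmem (w := ⟨v - 1, by omega⟩) (by grind) (by grind)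
      exact ⟨⟨_, hw⟩, ⟨⟨_, hx⟩, (hd.adj_iff _ hw _ hx).mpr (by grind)⟩, rfl⟩
    · have hx := hmem (w := ⟨v + 1, by omega⟩) (by grind) (by grind)
      exact ⟨⟨_, hw⟩, ⟨⟨_, hx⟩, (hd.adj_iff _ hw _ hx).mpr (by grind)⟩, rfl⟩

lemma cyclomaticNumber_eq [Fintype κ] (hd : IsLabelledWindmill d h m r) :
    cyclomaticNumber Γ = cyclomaticNumber K + r := by
  have hsupport : (Γ.induce (Set.range d)ᶜ).support.ncard = 2 * r := by
    rw [← Set.ncard_image_of_injective _ (Fin.val_injective.comp Subtype.val_injective)]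
    simp only [Function.comp_def, hd.image_support, Set.ncard_coe_finset, Nat.card_Ioc]
    omega
  rw [hd.isWindmill.cyclomaticNumber_eq, hsupport]
  push_cast
  ring

end IsLabelledWindmill

lemma exists_embedding_of_val {k : ℕ} {K : SimpleGraph (Fin k)} {label : Fin k → ℕ}
    (hinj : Function.Injective label) (hlt : ∀ i, label i < n)
    (hadj : ∀ i j, ∀ a b : Fin n, a.val = label i → b.val = label j → (Γ.Adj a b ↔ K.Adj i j)) :
    ∃ d : K ↪g Γ, ∀ i, (d i).val = label i :=
  ⟨⟨⟨fun i => ⟨label i, hlt i⟩, fun _ _ hij => hinj (Fin.mk.inj hij)⟩, hadj _ _ _ _ rfl rfl⟩,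
    fun _ => rfl⟩

lemma exists_isLabelledWindmill_G0 (hn : 2 * t + 3 ≤ n) :
    ∃ d : SimpleGraph.cycleGraph 3 ↪g G0 n (t + 1), IsLabelledWindmill d 0 1 t := by
  let d : SimpleGraph.cycleGraph 3 ↪g G0 n (t + 1) :=
    ⟨Fin.castLEEmb (by omega), fun {i j} => by
      rw [G0_adj_iff, SimpleGraph.cycleGraph_three_eq_top]
      fin_cases i <;> fin_cases j <;> simp⟩
  have hnotMem (w : Fin n) : w ∉ Set.range d ↔ 2 < w.val := by
    rw [Set.mem_range, ← not_le, not_iff_not]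
    exact ⟨fun ⟨i, hi⟩ => hi ▸ i.is_le, fun hw => ⟨⟨w, by omega⟩, rfl⟩⟩
  have hval (i : Fin 3) : (d i).val = i := rfl
  refine ⟨d, fun w hw i => ?_, fun w hw x hx => ?_, fun w _ => hnotMem w, by omega⟩
  · rw [hnotMem] at hw
    rw [G0_adj_iff, hval, Fin.ext_iff, Fin.val_zero]
    omega
  · rw [hnotMem] at hw hx
    rw [G0_adj_iff]
    omega

lemma exists_isLabelledWindmill_G4g (hn : 2 * t + 4 ≤ n) :
    ∃ d : G4g 4 1 ↪g G4g n (t + 1), IsLabelledWindmill d 0 1 t := by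
  obtain ⟨d, hval⟩ : ∃ d : G4g 4 1 ↪g G4g n (t + 1),
      ∀ i, (d i).val = if i.val = 3 then 2 * t + 3 else i.val := by
    refine exists_embedding_of_val (fun i j hij => ?_) (fun i => ?_) fun i j a b ha hb => ?_
    · split_ifs at hij <;> omega
    · split_ifs <;> omega
    · rw [G4g_adj_iff, G4g_adj_iff]
      split_ifs at ha hb <;> omega
  have hmem (w : Fin n) : w ∈ Set.range d ↔ w.val ≤ 2 ∨ w.val = 2 * t + 3 := by
    constructor
    · rintro ⟨i, rfl⟩
      have hi := hval i
      split_ifs at hi <;> omega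
    · rintro (hw | hw)
      · exact ⟨⟨w, by omega⟩, Fin.ext ((hval _).trans (if_neg (by dsimp only; omega)))⟩
      · exact ⟨3, Fin.ext ((hval 3).trans hw.symm)⟩
  refine ⟨d, fun w hw i => ?_, fun w hw x hx => ?_, fun w _ => ?_, by omega⟩
  · rw [hmem] at hw
    have hi := hval i
    rw [G4g_adj_iff, Fin.ext_iff, Fin.val_zero]
    split_ifs at hi <;> omega
  · rw [hmem] at hw hx
    rw [G4g_adj_iff]
    omega
  · rw [hmem]
    omega

lemma exists_isLabelledWindmill_G5g (hn : 2 * t + 4 ≤ n) :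
    ∃ d : SimpleGraph.cycleGraph 4 ↪g G5g n (t + 1), IsLabelledWindmill d 0 0 t := by
  obtain ⟨d, hval⟩ : ∃ d : SimpleGraph.cycleGraph 4 ↪g G5g n (t + 1),
      ∀ i, (d i).val = if i.val = 0 then 0 else 2 * t + i.val := by
    refine exists_embedding_of_val (fun i j hij => ?_) (fun i => ?_) fun i j a b ha hb => ?_
    · split_ifs at hij <;> omega
    · split_ifs <;> omega
    · rw [G5g_adj_iff, cycleGraph_adj_iff_mod (by norm_num)]
      split_ifs at ha hb <;> omega
  have hmem (w : Fin n) : w ∈ Set.range d ↔ w.val = 0 ∨ 2 * t < w.val ∧ w.val ≤ 2 * t + 3 := by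
    constructor
    · rintro ⟨i, rfl⟩
      have hi := hval i
      split_ifs at hi <;> omega
    · rintro (hw | hw)
      · exact ⟨0, Fin.ext ((hval 0).trans hw.symm)⟩
      · refine ⟨⟨w - 2 * t, by omega⟩, Fin.ext ((hval _).trans ?_)⟩
        rw [if_neg] <;> dsimp only <;> omega
  refine ⟨d, fun w hw i => ?_, fun w hw x hx => ?_, fun w _ => ?_, by omega⟩
  · rw [hmem] at hw
    have hi := hval i
    rw [G5g_adj_iff, Fin.ext_iff, Fin.val_zero]
    split_ifs at hi with hzero
    · omega
    · simp only [hzero, iff_false]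
      omega
  · rw [hmem] at hw hx
    rw [G5g_adj_iff]
    omega
  · rw [hmem]
    omega

namespace IsWindmill
variable {V : Type*} {G : SimpleGraph V} [Fintype V]

lemma nonempty_iso_of_isLabelledWindmill [Fintype κ] {c : K ↪g G} (hc : IsWindmill c h)
    (hcyc : cyclomaticNumber G = cyclomaticNumber K + r) (hn : Fintype.card V = n)
    (hlabel : 2 * r + Fintype.card κ ≤ n → ∃ d : K ↪g Γ, IsLabelledWindmill d h m r) :
    Nonempty (G ≃g Γ) := by
  have hcard := hc.two_mul_cyclomaticNumber_add_card_le
  rw [hcyc, hn] at hcard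
  obtain ⟨d, hd⟩ := hlabel (by rify; linarith)
  exact hc.nonempty_iso hd.isWindmill (by rw [hn, Fintype.card_fin])
    (by rw [hcyc, hd.cyclomaticNumber_eq])

lemma nonempty_iso_G0 {c : SimpleGraph.cycleGraph 3 ↪g G} (hc : IsWindmill c 0) (ht : 1 ≤ t)
    (hcyc : cyclomaticNumber G = t) (hn : Fintype.card V = n) : Nonempty (G ≃g G0 n t) := by
  obtain ⟨r, rfl⟩ := Nat.exists_eq_add_of_le' ht
  exact hc.nonempty_iso_of_isLabelledWindmill (r := r)
    (by rw [hcyc, cyclomaticNumber_cycleGraph le_rfl]; push_cast; ring) hn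
    exists_isLabelledWindmill_G0

lemma nonempty_iso_G4g {c : G4g 4 1 ↪g G} (hc : IsWindmill c 0) (ht : 1 ≤ t)
    (hcyc : cyclomaticNumber G = t) (hn : Fintype.card V = n) : Nonempty (G ≃g G4g n t) := by
  obtain ⟨r, rfl⟩ := Nat.exists_eq_add_of_le' ht
  exact hc.nonempty_iso_of_isLabelledWindmill (r := r)
    (by rw [hcyc, cyclomaticNumber_G4g_four_one]; push_cast; ring) hn
    exists_isLabelledWindmill_G4g

lemma nonempty_iso_G5g {c : SimpleGraph.cycleGraph 4 ↪g G} (hc : IsWindmill c 0) (ht : 1 ≤ t)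
    (hcyc : cyclomaticNumber G = t) (hn : Fintype.card V = n) : Nonempty (G ≃g G5g n t) := by
  obtain ⟨r, rfl⟩ := Nat.exists_eq_add_of_le' ht
  exact hc.nonempty_iso_of_isLabelledWindmill (r := r)
    (by rw [hcyc, cyclomaticNumber_cycleGraph (by norm_num)]; push_cast; ring) hn
    exists_isLabelledWindmill_G5g

end IsWindmill

end Families

lemma cycleGraph_exists_iso_apply_eq {k : ℕ} (i j : Fin k) :
    ∃ e : SimpleGraph.cycleGraph k ≃g SimpleGraph.cycleGraph k, e j = i := by
  obtain ⟨m, rfl⟩ := Nat.exists_eq_succ_of_ne_zero i.pos.ne'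
  refine ⟨⟨Equiv.addRight (i - j), fun {a b} => ?_⟩, add_sub_cancel _ _⟩
  rw [SimpleGraph.cycleGraph_eq_circulantGraph]
  exact SimpleGraph.circulantGraph_adj_translate

lemma cycleGraph_adj_iff_ne {k : ℕ} (hk : 2 ≤ k) (hk' : k ≤ 3) {i j : Fin k} :
    (SimpleGraph.cycleGraph k).Adj i j ↔ i ≠ j := by
  interval_cases k <;> revert i j <;> decide

namespace CactusBlock
variable {V : Type*} {G : SimpleGraph V} {B : CactusBlock G}

lemma adj_vertex_iff {i j : Fin B.size} :
    G.Adj (B.vertex i) (B.vertex j) ↔ (SimpleGraph.cycleGraph B.size).Adj i j := by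
  refine ⟨fun hadj => ?_, B.adj_vertex⟩
  have hij : i ≠ j := fun h => hadj.ne (congrArg B.vertex h)
  simpa only [B.proj_vertex] using
    (B.crossing hadj (by rwa [B.proj_vertex, B.proj_vertex])).2.2

lemma exists_cycleGraph_embedding {k : ℕ} (hk : B.size = k) (i : Fin B.size) (j : Fin k) :
    ∃ c : SimpleGraph.cycleGraph k ↪g G, Set.range c = Set.range B.vertex ∧ c j = B.vertex i := by
  subst hk
  obtain ⟨e, he⟩ := cycleGraph_exists_iso_apply_eq i j
  let c : SimpleGraph.cycleGraph B.size ↪g G :=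
    ⟨⟨B.vertex, B.vertex_injective⟩, B.adj_vertex_iff⟩
  exact ⟨e.toEmbedding.trans c, e.toEquiv.surjective.range_comp B.vertex, congrArg B.vertex he⟩

variable [Fintype V]

lemma eq_vertex_of_extra_eq_zero {i : Fin B.size} (hi : B.extra i = 0) {w : V}
    (hw : B.proj w = i) : w = B.vertex i := by
  have hcard := B.card_filter_proj i
  rw [hi, zero_add] at hcard
  exact card_le_one.mp hcard.le w (by simpa using hw) _ (by simp [B.proj_vertex])

lemma gate_eq_of_extra_eq_zero {w : V} (hw : B.extra (B.proj w) = 0) : B.gate w = w :=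
  (eq_vertex_of_extra_eq_zero hw rfl).symm

lemma proj_ne_and_gate_eq_of_adj {w z : V} (hw : B.extra (B.proj w) = 0) (hadj : G.Adj w z) :
    B.proj w ≠ B.proj z ∧ B.gate z = z := by
  have hne : B.proj w ≠ B.proj z := fun h =>
    hadj.ne ((gate_eq_of_extra_eq_zero hw).symm.trans (eq_vertex_of_extra_eq_zero hw h.symm).symm)
  exact ⟨hne, (B.crossing hadj hne).2.1⟩

lemma compl_range_vertex {i : Fin B.size} (hi : ∀ j, j ≠ i → B.extra j = 0) :
    (Set.range B.vertex)ᶜ = B.branch i \ {B.vertex i} := by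
  ext w
  rw [Set.mem_compl_iff, Set.mem_sdiff, Set.mem_singleton_iff]
  constructor
  · intro hw
    have hproj : B.proj w = i := by_contra fun h =>
      hw ⟨_, gate_eq_of_extra_eq_zero (hi _ h)⟩
    exact ⟨hproj, fun h => hw ⟨i, h.symm⟩⟩
  · rintro ⟨hproj, hne⟩ ⟨j, rfl⟩
    exact hne (congrArg B.vertex ((B.proj_vertex j).symm.trans hproj))

lemma exists_pendent_of_extra_eq_one (hG : G.Connected) {i : Fin B.size} (hi : B.extra i = 1) :
    ∃ p ≠ B.vertex i, (∀ w, B.proj w = i ↔ w = B.vertex i ∨ w = p) ∧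
      ∀ w, G.Adj p w ↔ w = B.vertex i := by
  have hcard := B.card_filter_proj i
  have hvertex : B.vertex i ∈ ({w | B.proj w = i} : Finset V) := by simp [B.proj_vertex]
  rw [hi, ← card_erase_add_one hvertex, add_left_inj, card_eq_one] at hcard
  obtain ⟨p, hp⟩ := hcard
  have hmem (w : V) : w ≠ B.vertex i ∧ B.proj w = i ↔ w = p := by
    simpa using Finset.ext_iff.mp hp w
  obtain ⟨hpi, hproj⟩ := (hmem p).mpr rfl
  have hadj {w : V} (hw : G.Adj p w) : w = B.vertex i := by
    by_contra hne
    have hw' : B.proj p = B.proj w := by_contra fun h =>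
      hpi ((B.crossing hw h).1.symm.trans (congrArg B.vertex hproj))
    exact hw.ne ((hmem w).mp ⟨hne, hw'.symm.trans hproj⟩).symm
  have : Nontrivial V := ⟨p, _, hpi⟩
  obtain ⟨w, hw⟩ := hG.preconnected.exists_adj_of_nontrivial p
  refine ⟨p, hpi, fun w => ?_, fun z => ⟨hadj, ?_⟩⟩
  · rw [← hmem w]
    by_cases hw : w = B.vertex i <;> simp [hw, B.proj_vertex]
  · rintro rfl
    exact hadj hw ▸ hw

lemma exists_G4g_embedding (hG : G.Connected) (htee : B.IsTee) :
    ∃ (c : G4g 4 1 ↪g G) (l : Fin B.size),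
      c 0 = B.vertex l ∧ (Set.range c)ᶜ = B.branch l \ {B.vertex l} := by
  obtain ⟨hsize, i, j, hij, hi, hj⟩ := htee
  obtain ⟨l, hil, hjl, huniv⟩ := exists_univ_eq_of_size_three hsize hij
  obtain ⟨p, hpi, hfiber, hp⟩ := exists_pendent_of_extra_eq_one hG hi
  have hproj : B.proj p = i := (hfiber p).mpr (.inr rfl)
  have hadj (a b : Fin B.size) : G.Adj (B.vertex a) (B.vertex b) ↔ a ≠ b :=
    adj_vertex_iff.trans (cycleGraph_adj_iff_ne B.two_le_size hsize.le)
  have hne (a : Fin B.size) : B.vertex a ≠ p := fun h =>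
    hpi (by rw [← hproj, ← h, B.proj_vertex])
  let f : Fin 4 → V := ![B.vertex l, B.vertex i, B.vertex j, p]
  have hf_adj {a b : Fin 4} : G.Adj (f a) (f b) ↔ (G4g 4 1).Adj a b := by
    fin_cases a <;> fin_cases b <;>
      simp [f, G4g_adj_iff, hadj, hp, G.adj_comm _ p, B.vertex_injective.eq_iff, hij, hil, hjl,
        hij.symm, hil.symm, hjl.symm]
  have hf_inj : Function.Injective f := by
    intro a b hab
    fin_cases a <;> fin_cases b <;>
      simp [f, B.vertex_injective.eq_iff, hne, fun a => (hne a).symm, hij, hil, hjl, hij.symm,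
        hil.symm, hjl.symm] at hab ⊢
  have hrange (w : V) : w ∈ Set.range f ↔ (B.proj w = l → w = B.vertex l) := by
    have hw : B.proj w = i ∨ B.proj w = j ∨ B.proj w = l := by
      simpa [huniv] using mem_univ (B.proj w)
    have hmem : w ∈ Set.range f ↔ w = p ∨ w = B.vertex j ∨ w = B.vertex i ∨ w = B.vertex l := by
      simp [f]
    rw [hmem]
    constructor
    · rintro (rfl | rfl | rfl | rfl) <;> simp [B.proj_vertex, hproj, hil, hjl]
    · rcases hw with hw | hw | hw <;> intro h
      · exact ((hfiber w).mp hw).elim (fun h => .inr (.inr (.inl h))) .inl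
      · exact .inr (.inl (eq_vertex_of_extra_eq_zero hj hw))
      · exact .inr (.inr (.inr (h hw)))
  refine ⟨⟨⟨f, hf_inj⟩, hf_adj⟩, l, rfl, Set.ext fun w => ?_⟩
  exact (not_congr (hrange w)).trans Classical.not_imp

end CactusBlock

namespace IsBlockDecomposition
variable {V β : Type*} {G : SimpleGraph V} {B : β → CactusBlock G}

lemma proj_vertex_eq (hB : IsBlockDecomposition B) {b b' : β} (hb : b' ≠ b)
    (i j : Fin (B b).size) : (B b').proj ((B b).vertex i) = (B b').proj ((B b).vertex j) := by
  obtain ⟨p⟩ : (SimpleGraph.cycleGraph (B b).size).Reachable i j :=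
    SimpleGraph.cycleGraph_preconnected i j
  induction p with
  | nil => rfl
  | cons hadj _ ih =>
    refine Eq.trans (by_contra fun hne => hb ?_) ih
    exact (hB _ _ ((B b).adj_vertex hadj)).unique hne (by
      rw [CactusBlock.proj_vertex, CactusBlock.proj_vertex]
      exact hadj.ne)

lemma proj_eq_of_gate_eq (hB : IsBlockDecomposition B) {b b' : β} (hb : b' ≠ b) {w z : V}
    (hw : (B b).gate w = w) (hz : (B b).gate z = z) : (B b').proj w = (B b').proj z := by
  rw [← hw, ← hz]
  exact hB.proj_vertex_eq hb _ _

variable [Finite β]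

lemma exists_gate_eq_and_gate_ne (hB : IsBlockDecomposition B) (hG : G.Connected) {u v : V}
    (huv : u ≠ v) : ∃ b, (B b).gate u = u ∧ (B b).gate v ≠ u := by
  have := Fintype.ofFinite β
  by_contra! hall
  have hsum := hB.sum_gate_sub hG (fun x => if x = u then (1 : ℤ) else 0) u v
  rw [if_pos rfl, if_neg huv.symm, sub_zero] at hsum
  refine absurd (sum_nonpos fun b _ => ?_) (hsum.trans_gt one_pos).not_ge
  by_cases hu : (B b).gate u = u
  · simp [hu, hall b hu]
  · simp only [hu, if_false]
    split_ifs <;> norm_num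

variable [Fintype V] {b₀ : β} {i₀ : Fin (B b₀).size}

lemma exists_star_of_mem_branch (hB : IsBlockDecomposition B) (hG : G.Connected)
    (hstar : ∀ b, b ≠ b₀ → (B b).IsStar) {w : V}
    (hw : w ∈ (B b₀).branch i₀ \ {(B b₀).vertex i₀}) :
    ∃ b ≠ b₀, (B b).proj w ≠ (B b).proj ((B b₀).vertex i₀) ∧
      ∀ j, j ≠ (B b).proj ((B b₀).vertex i₀) → (B b).extra j = 0 := by
  obtain ⟨hproj, hne⟩ := hw
  obtain ⟨b, hgate, hhub⟩ := hB.exists_gate_eq_and_gate_ne hG hne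
  have hb : b ≠ b₀ := by
    rintro rfl
    exact hne (hgate.symm.trans (congrArg _ hproj))
  obtain ⟨c, hc⟩ := hstar b hb
  have hcentre : (B b).proj ((B b₀).vertex i₀) = c := by
    by_contra h
    have : Nontrivial (Fin (B b₀).size) := Fin.nontrivial_iff_two_le.mpr (B b₀).two_le_size
    obtain ⟨k, hk⟩ := exists_ne i₀
    refine hk ((B b₀).vertex_injective ?_)
    exact (CactusBlock.eq_vertex_of_extra_eq_zero (hc _ h) (hB.proj_vertex_eq hb k i₀)).trans
      (CactusBlock.gate_eq_of_extra_eq_zero (hc _ h))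
  refine ⟨b, hb, fun h => hhub ?_, fun j hj => hc j (hcentre ▸ hj)⟩
  rw [CactusBlock.gate, ← h]
  exact hgate

lemma exists_star_gate_eq_of_mem_branch (hB : IsBlockDecomposition B) (hG : G.Connected)
    (hstar : ∀ b, b ≠ b₀ → (B b).IsStar) {w : V}
    (hw : w ∈ (B b₀).branch i₀ \ {(B b₀).vertex i₀}) :
    ∃ b ≠ b₀, (B b).gate ((B b₀).vertex i₀) = (B b₀).vertex i₀ ∧
      (B b).proj w ≠ (B b).proj ((B b₀).vertex i₀) ∧
      ∀ j, j ≠ (B b).proj ((B b₀).vertex i₀) → (B b).extra j = 0 := by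
  obtain ⟨b, hb, hne, hextra⟩ := hB.exists_star_of_mem_branch hG hstar hw
  refine ⟨b, hb, ?_, hne, hextra⟩
  -- If `g` is not the vertex at `i₀`, it lies in the branch too, and a second star identifies it
  -- with `w`.
  set g := (B b).gate ((B b₀).vertex i₀) with hg
  by_contra hhub
  have hwgate : (B b).gate w = w := CactusBlock.gate_eq_of_extra_eq_zero (hextra _ hne)
  have hggate : (B b).gate g = g := (B b).gate_vertex _
  have hgproj : (B b).proj g = (B b).proj ((B b₀).vertex i₀) := (B b).proj_vertex _
  have hgmem : g ∈ (B b₀).branch i₀ \ {(B b₀).vertex i₀} :=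
    ⟨(hB.proj_eq_of_gate_eq hb.symm hggate hwgate).trans hw.1, hhub⟩
  obtain ⟨b', -, hne', hextra'⟩ := hB.exists_star_of_mem_branch hG hstar hgmem
  have hb' : b' ≠ b := by
    rintro rfl
    exact hne' hgproj
  have hproj := hB.proj_eq_of_gate_eq hb' hwgate hggate
  have hwg : w = g := (CactusBlock.eq_vertex_of_extra_eq_zero (hextra' _ hne') hproj).trans
    (CactusBlock.gate_eq_of_extra_eq_zero (hextra' _ hne'))
  exact hne (hwg ▸ hgproj)

lemma adj_of_mem_branch (hB : IsBlockDecomposition B) (hG : G.Connected)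
    (hstar : ∀ b, b ≠ b₀ → (B b).size ≤ 3 ∧ (B b).IsStar) {w : V}
    (hw : w ∈ (B b₀).branch i₀ \ {(B b₀).vertex i₀}) :
    G.Adj w ((B b₀).vertex i₀) ∧
      (G.neighborSet w \ {(B b₀).vertex i₀}).Subsingleton ∧
      G.neighborSet w ⊆ (B b₀).branch i₀ := by
  obtain ⟨b, hb, hhub, hne, hextra⟩ :=
    hB.exists_star_gate_eq_of_mem_branch hG (fun b hb => (hstar b hb).2) hw
  have hwgate : (B b).gate w = w := CactusBlock.gate_eq_of_extra_eq_zero (hextra _ hne)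
  have hneighbor {z : V} (hz : G.Adj w z) : (B b).proj w ≠ (B b).proj z ∧ (B b).gate z = z :=
    CactusBlock.proj_ne_and_gate_eq_of_adj (hextra _ hne) hz
  have hproj_ne {z : V} (hz : z ∈ G.neighborSet w \ {(B b₀).vertex i₀}) :
      (B b).proj z ≠ (B b).proj ((B b₀).vertex i₀) := fun h =>
    hz.2 ((hneighbor hz.1).2.symm.trans ((congrArg (B b).vertex h).trans hhub))
  refine ⟨?_, fun x hx y hy => ?_, fun z hz => ?_⟩
  · rw [← hwgate, ← hhub]
    exact (B b).adj_vertex ((cycleGraph_adj_iff_ne (B b).two_le_size (hstar b hb).1).mpr hne)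
  · have hproj : (B b).proj x = (B b).proj y := by
      have := (hneighbor hx.1).1
      have := (hneighbor hy.1).1
      have := hproj_ne hx
      have := hproj_ne hy
      have := (hstar b hb).1
      omega
    exact CactusBlock.eq_of_proj_eq (hneighbor hx.1).2 (hneighbor hy.1).2 hproj
  · exact (hB.proj_eq_of_gate_eq hb.symm (hneighbor hz).2 hwgate).trans hw.1

theorem isWindmill (hB : IsBlockDecomposition B) (hG : G.Connected)
    (hstar : ∀ b, b ≠ b₀ → (B b).size ≤ 3 ∧ (B b).IsStar) {κ : Type*} {K : SimpleGraph κ}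
    {c : K ↪g G} {h : κ} (hc : c h = (B b₀).vertex i₀)
    (hcore : (Set.range c)ᶜ = (B b₀).branch i₀ \ {(B b₀).vertex i₀}) : IsWindmill c h := by
  have hmem {w : V} : w ∉ Set.range c ↔ w ∈ (B b₀).branch i₀ \ {(B b₀).vertex i₀} := by
    rw [← hcore, Set.mem_compl_iff]
  refine ⟨fun w hw i => ⟨fun hadj => ?_, ?_⟩, fun ⟨w, hw⟩ ⟨x, hx⟩ hwx ⟨y, hy⟩ hwy => ?_⟩
  · obtain ⟨-, -, hbranch⟩ := hB.adj_of_mem_branch hG hstar (hmem.mp hw)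
    refine c.injective (by_contra fun hne => hmem.mpr ⟨hbranch hadj, ?_⟩ ⟨i, rfl⟩)
    rwa [Set.mem_singleton_iff, ← hc]
  · rintro rfl
    rw [hc]
    exact (hB.adj_of_mem_branch hG hstar (hmem.mp hw)).1
  · obtain ⟨-, hsubsingleton, -⟩ := hB.adj_of_mem_branch hG hstar (hmem.mp hw)
    exact Subtype.ext (hsubsingleton ⟨hwx, (hmem.mp hx).2⟩ ⟨hwy, (hmem.mp hy).2⟩)

lemma exists_isWindmill_of_isStar (hB : IsBlockDecomposition B) (hG : G.Connected)
    (hstar : ∀ b, b ≠ b₀ → (B b).size ≤ 3 ∧ (B b).IsStar) (hstar₀ : (B b₀).IsStar) {k : ℕ}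
    (hk : (B b₀).size = k) (h : Fin k) :
    ∃ c : SimpleGraph.cycleGraph k ↪g G, IsWindmill c h := by
  obtain ⟨i, hi⟩ := hstar₀
  obtain ⟨c, hrange, hc⟩ := CactusBlock.exists_cycleGraph_embedding hk i h
  exact ⟨c, hB.isWindmill hG hstar hc (by rw [hrange, CactusBlock.compl_range_vertex hi])⟩

lemma exists_isWindmill_of_isTee (hB : IsBlockDecomposition B) (hG : G.Connected)
    (hstar : ∀ b, b ≠ b₀ → (B b).size ≤ 3 ∧ (B b).IsStar) (htee : (B b₀).IsTee) :
    ∃ c : G4g 4 1 ↪g G, IsWindmill c 0 := by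
  obtain ⟨c, l, hl, hrange⟩ := CactusBlock.exists_G4g_embedding hG htee
  exact ⟨c, hB.isWindmill hG hstar hl hrange⟩

end IsBlockDecomposition

namespace IsBlockDecomposition
open CactusBlock
variable {V β : Type*} {G : SimpleGraph V} [Fintype V] {B : β → CactusBlock G}

section Finite
variable [Finite β]

lemma two_mul_cyclomaticNumber_add_three_le (hB : IsBlockDecomposition B) (hG : G.Connected)
    {b₁ b₂ : β} (hne : b₁ ≠ b₂) (h₁ : 4 ≤ (B b₁).size) (h₂ : 4 ≤ (B b₂).size) :
    2 * cyclomaticNumber G + 3 ≤ Fintype.card V := by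
  have := Fintype.ofFinite β
  have hle (b : β) : (if (B b).size ≠ 2 then (2 : ℝ) else 0) + (if b = b₁ then 1 else 0)
      + (if b = b₂ then 1 else 0) ≤ (B b).size - 1 := by
    have hsize : (if (B b).size ≠ 2 then 2 else 0) + (if b = b₁ then 1 else 0)
        + (if b = b₂ then 1 else 0) + 1 ≤ (B b).size := by
      have := (B b).two_le_size
      split_ifs <;> grind
    have : _ ≤ ((B b).size : ℝ) := Nat.cast_le.mpr hsize
    push_cast at this
    linarith
  have hsum := sum_le_sum fun b (_ : b ∈ univ) => hle b
  rw [hB.sum_size_sub_one hG, sum_add_distrib, sum_add_distrib, ← sum_filter, sum_const,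
    nsmul_eq_mul, hB.card_filter_size_ne_two hG] at hsum
  simp only [sum_ite_eq', mem_univ, if_true] at hsum
  linarith

lemma teeExcess_lt_add_excess (hB : IsBlockDecomposition B) (hG : G.Connected)
    (hV : 24 ≤ Fintype.card V) {b₁ b₂ : β} (hne : b₁ ≠ b₂)
    (h₁ : ¬ ((B b₁).size ≤ 3 ∧ (B b₁).IsStar)) (h₂ : ¬ ((B b₂).size ≤ 3 ∧ (B b₂).IsStar)) :
    teeExcess G < (B b₁).excess + (B b₂).excess := by
  have hτ := cyclomaticNumber_nonneg hG
  have hV' : (24 : ℝ) ≤ Fintype.card V := by exact_mod_cast hV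
  have hcases (b : β) (hb : ¬ ((B b).size ≤ 3 ∧ (B b).IsStar)) :
      teeExcess G ≤ (B b).excess ∨ (B b).size = 4 ∧
        (B b).excess = (5 * Fintype.card V - 31 + cyclomaticNumber G) / 3 := by
    by_cases htee : (B b).IsTee
    · exact .inl (excess_of_isTee hG htee).ge
    by_cases hquad : (B b).size ≤ 4 ∧ (B b).IsStar
    · have hsize : (B b).size = 4 :=
        le_antisymm hquad.1 (not_le.mp fun hle => hb ⟨hle, hquad.2⟩)
      exact .inr ⟨hsize, excess_of_isStar_of_size_four hG hsize hquad.2⟩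
    · exact .inl (teeExcess_lt_excess hG hV hquad htee).le
  have htee : teeExcess G = (8 * Fintype.card V - 36 + 4 * cyclomaticNumber G) / 3 := rfl
  rcases hcases b₁ h₁ with he₁ | ⟨hs₁, he₁⟩ <;> rcases hcases b₂ h₂ with he₂ | ⟨hs₂, he₂⟩
  · linarith
  · linarith
  · linarith
  · linarith [hB.two_mul_cyclomaticNumber_add_three_le hG hne hs₁.ge hs₂.ge]

lemma nonempty_iso_G0_of_isStar (hB : IsBlockDecomposition B) (hG : G.Connected) {n t : ℕ}
    (ht : 1 ≤ t) (hcyc : cyclomaticNumber G = t) (hn : Fintype.card V = n)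
    (hstar : ∀ b, (B b).size ≤ 3 ∧ (B b).IsStar) : Nonempty (G ≃g G0 n t) := by
  have := Fintype.ofFinite β
  have hcard : #{b | (B b).size ≠ 2} = t := by
    exact_mod_cast (hB.card_filter_size_ne_two hG).trans hcyc
  obtain ⟨b₀, hb₀⟩ : ({b | (B b).size ≠ 2} : Finset β).Nonempty := card_pos.mp (by omega)
  have hsize : (B b₀).size = 3 :=
    le_antisymm (hstar b₀).1 (lt_of_le_of_ne (B b₀).two_le_size (mem_filter.mp hb₀).2.symm)
  obtain ⟨c, hc⟩ := hB.exists_isWindmill_of_isStar hG (fun b _ => hstar b) (hstar b₀).2 hsize 0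
  exact hc.nonempty_iso_G0 ht hcyc hn

end Finite

variable [Fintype β]

lemma exists_isStar_or_isTee_of_sum_excess_le (hB : IsBlockDecomposition B) (hG : G.Connected)
    (hV : 24 ≤ Fintype.card V) (hle : ∑ b, (B b).excess ≤ teeExcess G) :
    ∃ b₀, ((B b₀).size ≤ 4 ∧ (B b₀).IsStar ∨ (B b₀).IsTee) ∧
      ∀ b, b ≠ b₀ → (B b).size ≤ 3 ∧ (B b).IsStar := by
  have hnonneg (b : β) : 0 ≤ (B b).excess := excess_nonneg hG hV
  have hmild (b : β) : (B b).size ≤ 4 ∧ (B b).IsStar ∨ (B b).IsTee := by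
    by_contra! hb
    have hlt := teeExcess_lt_excess hG hV (fun h => hb.1 h.1 h.2) hb.2
    exact absurd (single_le_sum (fun b _ => hnonneg b) (mem_univ b)) (hle.trans_lt hlt).not_ge
  obtain ⟨b₀, hb₀⟩ : ∃ b₀, ∀ b, b ≠ b₀ → (B b).size ≤ 3 ∧ (B b).IsStar := by
    by_contra! hne
    have : Nontrivial V := Fintype.one_lt_card_iff_nontrivial.mp (by omega)
    obtain ⟨u, v, huv⟩ := exists_pair_ne V
    obtain ⟨b, -⟩ := hB.exists_gate_eq_and_gate_ne hG huv
    obtain ⟨b₁, -, h₁⟩ := hne b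
    obtain ⟨b₂, hb, h₂⟩ := hne b₁
    have hsum : (B b₂).excess + (B b₁).excess ≤ ∑ b, (B b).excess := by
      rw [← sum_pair (f := fun b => (B b).excess) hb]
      exact sum_le_univ_sum_of_nonneg hnonneg
    exact absurd (hB.teeExcess_lt_add_excess hG hV hb (fun h => h₂ h.1 h.2) fun h => h₁ h.1 h.2)
      (hsum.trans hle).not_gt
  exact ⟨b₀, hmild b₀, hb₀⟩

lemma sum_excess_eq (hG : G.Connected) {b₀ : β}
    (hstar : ∀ b, b ≠ b₀ → (B b).size ≤ 3 ∧ (B b).IsStar) :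
    ∑ b, (B b).excess = (B b₀).excess :=
  sum_eq_single b₀ (fun b _ hb => excess_eq_zero hG (hstar b hb).1 (hstar b hb).2)
    fun h => absurd (mem_univ b₀) h

theorem nonempty_iso_of_sum_excess_le (hB : IsBlockDecomposition B) (hG : G.Connected) {n t : ℕ}
    (hn24 : 24 ≤ n) (ht : 1 ≤ t) (hcyc : cyclomaticNumber G = t) (hn : Fintype.card V = n)
    (hle : ∑ b, (B b).excess ≤ teeExcess G) :
    Nonempty (G ≃g G0 n t) ∨ Nonempty (G ≃g G5g n t) ∨
      Nonempty (G ≃g G4g n t) ∧ ∑ b, (B b).excess = teeExcess G := by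
  obtain ⟨b₀, ⟨hsize, hstar₀⟩ | htee, hstar⟩ :=
    hB.exists_isStar_or_isTee_of_sum_excess_le hG (hn ▸ hn24) hle
  · rcases hsize.eq_or_lt with hsize | hsize
    · obtain ⟨c, hc⟩ := hB.exists_isWindmill_of_isStar hG hstar hstar₀ hsize 0
      exact .inr (.inl (hc.nonempty_iso_G5g ht hcyc hn))
    · refine .inl (hB.nonempty_iso_G0_of_isStar hG ht hcyc hn fun b => ?_)
      rcases eq_or_ne b b₀ with rfl | hb
      exacts [⟨Nat.le_of_lt_succ hsize, hstar₀⟩, hstar b hb]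
  · obtain ⟨c, hc⟩ := hB.exists_isWindmill_of_isTee hG hstar htee
    exact .inr (.inr ⟨hc.nonempty_iso_G4g ht hcyc hn,
      (sum_excess_eq hG hstar).trans (excess_of_isTee hG htee)⟩)

end IsBlockDecomposition

lemma card_le_two_of_cycleGraph_adj {k : ℕ} (hk : 2 ≤ k) {i : Fin k} {s : Finset (Fin k)}
    (hs : ∀ j ∈ s, (SimpleGraph.cycleGraph k).Adj i j) : #s ≤ 2 := by
  have hle : (#s : ℝ) ≤ cycleDegree k := by
    rw [← sum_cycleGraph_adj hk i, sum_boole]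
    exact_mod_cast card_le_card fun j hj => mem_filter_univ j |>.mpr (hs j hj)
  have : cycleDegree k ≤ 2 := by unfold cycleDegree; split_ifs <;> norm_num
  exact_mod_cast hle.trans this

lemma le_three_of_cycleGraph_adj {k : ℕ} (hk : 2 ≤ k) (i : Fin k)
    (hi : ∀ j, j ≠ i → (SimpleGraph.cycleGraph k).Adj i j) : k ≤ 3 := by
  have hle := card_le_two_of_cycleGraph_adj hk
    fun j (hj : j ∈ univ.erase i) => hi j (ne_of_mem_erase hj)
  rw [card_erase_of_mem (mem_univ i), card_univ, Fintype.card_fin] at hle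
  omega

namespace CactusBlock
variable {V : Type*} {G : SimpleGraph V} {B : CactusBlock G} {z q r p : V}

lemma proj_eq_of_adj (hpz : p ≠ z) (hpr : p ≠ r) (hpq : G.Adj p q) (hgz : B.gate z = z)
    (hgr : B.gate r = r) (hzr : B.proj z ≠ B.proj r)
    (hqz : (SimpleGraph.cycleGraph B.size).Adj (B.proj q) (B.proj z))
    (hqr : (SimpleGraph.cycleGraph B.size).Adj (B.proj q) (B.proj r)) :
    B.proj p = B.proj q := by
  by_contra hne
  obtain ⟨hgp, -, hadj⟩ := B.crossing hpq hne
  have hcard := card_le_two_of_cycleGraph_adj B.two_le_size (i := B.proj q)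
    (s := {B.proj z, B.proj r, B.proj p}) (by simp [hqz, hqr, hadj.symm])
  have hzp : B.proj z ≠ B.proj p := fun h => hpz (eq_of_proj_eq hgp hgz h.symm)
  have hrp : B.proj r ≠ B.proj p := fun h => hpr (eq_of_proj_eq hgp hgr h.symm)
  rw [card_eq_three.mpr ⟨_, _, _, hzr, hzp, hrp, rfl⟩] at hcard
  omega

variable [Fintype V]

lemma extra_eq_zero {i : Fin B.size} (hi : ∀ w, B.proj w = i → B.gate w = w) :
    B.extra i = 0 := by
  have hle : #{w | B.proj w = i} ≤ 1 := card_le_one.mpr fun w hw x hx => by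
    rw [mem_filter_univ] at hw hx
    exact eq_of_proj_eq (hi w hw) (hi x hx) (hw.trans hx.symm)
  rw [card_filter_proj] at hle
  omega

lemma size_le_three_and_isStar_of_proj_eq (hz : ∀ w, w ≠ z → w ≠ p → G.Adj z w)
    (hpq : G.Adj p q) (hzq : B.proj z = B.proj q) : B.size ≤ 3 ∧ B.IsStar := by
  have hcross (w : V) (hw : B.proj w ≠ B.proj z) :
      B.gate w = w ∧ (SimpleGraph.cycleGraph B.size).Adj (B.proj z) (B.proj w) := by
    by_cases hwp : w = p
    · subst hwp
      have := B.crossing hpq (hzq ▸ hw)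
      exact ⟨this.1, hzq ▸ this.2.2.symm⟩
    · exact (B.crossing (hz w (ne_of_apply_ne B.proj hw) hwp) hw.symm).2
  refine ⟨le_three_of_cycleGraph_adj B.two_le_size (B.proj z) fun j hj => ?_,
    B.proj z, fun j hj => extra_eq_zero fun w hw => (hcross w (hw ▸ hj)).1⟩
  simpa only [B.proj_vertex] using (hcross (B.vertex j) (by rwa [B.proj_vertex])).2

lemma extra_eq_one {w x : V} (hwx : w ≠ x)
    (hx : ∀ y, B.proj y = B.proj w ↔ y = w ∨ y = x) : B.extra (B.proj w) = 1 := by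
  have hcard := B.card_filter_proj (B.proj w)
  rw [show ({y | B.proj y = B.proj w} : Finset V) = {w, x} by ext y; simp [hx],
    card_pair hwx] at hcard
  omega

lemma isTee_of_proj_ne (hz : ∀ w, G.Adj z w ↔ w ≠ z ∧ w ≠ p) (hpz : p ≠ z) (hpq : G.Adj p q)
    (hzr : G.Adj z r) (hqr : G.Adj q r) (hne : B.proj z ≠ B.proj q) : B.IsTee := by
  have hzq : G.Adj z q := (hz q).mpr ⟨ne_of_apply_ne B.proj hne.symm, hpq.ne'⟩
  obtain ⟨hgz, hgq, hadj_zq⟩ := B.crossing hzq hne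
  have hrz : B.proj r ≠ B.proj z := fun h =>
    hzr.ne' (eq_of_proj_eq (B.crossing hqr (h ▸ hne.symm)).2.1 hgz h)
  have hrq : B.proj r ≠ B.proj q := fun h =>
    hqr.ne' (eq_of_proj_eq (B.crossing hzr (h ▸ hne)).2.1 hgq h)
  obtain ⟨-, hgr, hadj_qr⟩ := B.crossing hqr hrq.symm
  have hproj : B.proj p = B.proj q := proj_eq_of_adj hpz ((hz r).mp hzr).2.symm hpq hgz hgr
    hrz.symm hadj_zq.symm hadj_qr
  have hcross {w : V} (hw : B.proj w ≠ B.proj z) (hwp : w ≠ p) :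
      B.gate w = w ∧ (SimpleGraph.cycleGraph B.size).Adj (B.proj z) (B.proj w) :=
    (B.crossing ((hz w).mpr ⟨ne_of_apply_ne B.proj hw, hwp⟩) hw.symm).2
  have hgp : B.gate p ≠ p := fun h => hpq.ne (eq_of_proj_eq h hgq hproj)
  have hsize : B.size ≤ 3 := le_three_of_cycleGraph_adj B.two_le_size (B.proj z) fun j hj => by
    simpa only [B.proj_vertex] using
      (hcross (by rwa [B.proj_vertex]) fun h => hgp (h ▸ B.gate_vertex j)).2
  have hsize' : 3 ≤ B.size := by
    rw [← Fintype.card_fin B.size, ← card_eq_three.mpr ⟨_, _, _, hne, hrz.symm, hrq.symm, rfl⟩]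
    exact card_le_univ _
  refine ⟨le_antisymm hsize hsize', B.proj q, B.proj r, hrq.symm,
    extra_eq_one hpq.ne' fun w => ⟨fun hw => ?_, ?_⟩,
    extra_eq_zero fun w hw => (hcross (hw ▸ hrz) fun h => hrq ?_).1⟩
  · exact or_iff_not_imp_right.mpr fun hwp =>
      eq_of_proj_eq (hcross (hw ▸ hne.symm) hwp).1 hgq hw
  · rintro (rfl | rfl)
    exacts [rfl, hproj]
  · rw [← hw, h, hproj]

end CactusBlock

lemma G4g_eq_G0 {n t : ℕ} (hn : n ≤ 2 * t + 1) : G4g n t = G0 n t := by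
  ext a b
  rw [G4g_adj_iff, G0_adj_iff]
  omega

namespace IsBlockDecomposition
open CactusBlock
variable {V β : Type*} {G : SimpleGraph V} [Fintype V] [Fintype β] {B : β → CactusBlock G}

lemma sum_excess_eq_teeExcess (hB : IsBlockDecomposition B) (hG : G.Connected) {z q r p : V}
    (hz : ∀ w, G.Adj z w ↔ w ≠ z ∧ w ≠ p) (hpz : p ≠ z) (hpq : G.Adj p q) (hzr : G.Adj z r)
    (hqr : G.Adj q r) : ∑ b, (B b).excess = teeExcess G := by
  have hqz : q ≠ z := fun h => ((hz p).mp (h ▸ hpq.symm)).2 rfl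
  obtain ⟨b₀, hb₀, hunique⟩ := hB z q ((hz q).mpr ⟨hqz, hpq.ne'⟩)
  rw [sum_excess_eq hG (b₀ := b₀) fun b hb => size_le_three_and_isStar_of_proj_eq
    (fun w hwz hwp => (hz w).mpr ⟨hwz, hwp⟩) hpq (not_not.mp (mt (hunique b) hb))]
  exact excess_of_isTee hG (isTee_of_proj_ne hz hpz hpq hzr hqr hb₀)

theorem sum_excess_eq_teeExcess_of_iso (hB : IsBlockDecomposition B) (hG : G.Connected) {n t : ℕ}
    (ht : 1 ≤ t) (hn : 2 * t + 1 < n) (φ : G ≃g G4g n t) :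
    ∑ b, (B b).excess = teeExcess G := by
  have hadj (a : Fin n) (w : V) : G.Adj (φ.symm a) w ↔ (G4g n t).Adj a (φ w) := by
    rw [← φ.map_adj_iff, φ.apply_symm_apply]
  have hval (a : Fin n) (w : V) : w = φ.symm a ↔ (φ w).val = a.val := by
    rw [← Fin.ext_iff]
    exact φ.toEquiv.eq_symm_apply
  refine hB.sum_excess_eq_teeExcess hG (z := φ.symm ⟨0, by omega⟩) (q := φ.symm ⟨1, by omega⟩)
    (r := φ.symm ⟨2, by omega⟩) (p := φ.symm ⟨2 * t + 1, hn⟩) (fun w => ?_)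
    (φ.symm.injective.ne (Fin.ne_of_val_ne (Nat.succ_ne_zero _))) ?_ ?_ ?_
  · simp only [hadj, G4g_adj_iff, ne_eq, hval, true_and]
    omega
  all_goals
    rw [hadj, φ.apply_symm_apply, G4g_adj_iff]
    dsimp only
    omega

theorem degRes_eq_add_sum_excess_sub_teeExcess (hB : IsBlockDecomposition B) (hG : G.Connected)
    {n t : ℕ} (hcyc : cyclomaticNumber G = t) (hn : Fintype.card V = n) :
    degRes G = -(4 / 3) * (t : ℝ) ^ 2 + ((4 / 3) * (n : ℝ) - 10 / 3) * t + 3 * (n : ℝ) ^ 2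
      - (13 / 3) * n - 8 + (∑ b, (B b).excess - teeExcess G) := by
  rw [hB.degRes_eq_add_sum_excess hG, teeExcess, trianglePrice, pendentPrice, hcyc, hn]
  ring

end IsBlockDecomposition

end

-- The graph `G8g 23 10` attains the bound as well, so `24` cannot be replaced by `23`.
theorem stmt_19_general (n t : ℕ) (hn : 24 ≤ n) (ht : 1 ≤ t) {V : Type*} [Finite V]
    (G : SimpleGraph V) (hG : MemCact n t G) (hnot0 : ¬ Nonempty (G ≃g G0 n t))
    (hnot5 : ¬ Nonempty (G ≃g G5g n t)) :
    -(4 / 3) * (t : ℝ) ^ 2 + ((4 / 3) * (n : ℝ) - 10 / 3) * t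
        + 3 * (n : ℝ) ^ 2 - (13 / 3) * n - 8 ≤ degRes G ∧
    (degRes G = -(4 / 3) * (t : ℝ) ^ 2 + ((4 / 3) * (n : ℝ) - 10 / 3) * t
        + 3 * (n : ℝ) ^ 2 - (13 / 3) * n - 8 ↔ Nonempty (G ≃g G4g n t)) := by
  have := Fintype.ofFinite V
  obtain ⟨hcactus, hcard, hcycles⟩ := hG
  have hconn : G.Connected := hcactus.1
  rw [Nat.card_eq_fintype_card] at hcard
  obtain ⟨β, _, B, hB, hsize⟩ := hcactus.exists_isBlockDecomposition
  have hcyc : cyclomaticNumber G = t := by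
    rw [← hB.card_filter_size_ne_two hconn, hsize, hcycles]
  have hiso (hle : ∑ b, (B b).excess ≤ CactusBlock.teeExcess G) :
      Nonempty (G ≃g G4g n t) ∧ ∑ b, (B b).excess = CactusBlock.teeExcess G := by
    simpa only [hnot0, hnot5, false_or] using
      hB.nonempty_iso_of_sum_excess_le hconn hn ht hcyc hcard hle
  have hexcess (φ : G ≃g G4g n t) : ∑ b, (B b).excess = CactusBlock.teeExcess G := by
    refine hB.sum_excess_eq_teeExcess_of_iso hconn ht ?_ φ
    by_contra! hle
    exact hnot0 (G4g_eq_G0 hle ▸ ⟨φ⟩)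
  rw [hB.degRes_eq_add_sum_excess_sub_teeExcess hconn hcyc hcard]
  refine ⟨?_, fun h => (hiso (by linarith)).1, fun ⟨φ⟩ => by linarith [hexcess φ]⟩
  by_contra! hlt
  linarith [(hiso (by linarith)).2]

/-- Corollary 5.2: for `G ∈ Cact(n;t)` not isomorphic to `G⁰(n,t)` or `G5`, with
`n ≥ 25`, `t ≥ 1`, one has
`D_R(G) ≥ -(4/3)t² + ((4/3)n - 10/3)t + 3n² - (13/3)n - 8`,
with equality iff `G ≅ G4`. -/
theorem stmt_19 (n t : ℕ) (hn : 25 ≤ n) (ht : 1 ≤ t)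
    {V : Type*} [Finite V] (G : SimpleGraph V) (hG : MemCact n t G)
    (hnot0 : ¬ Nonempty (G ≃g G0 n t)) (hnot5 : ¬ Nonempty (G ≃g G5g n t)) :
    -(4 / 3) * (t : ℝ) ^ 2 + ((4 / 3) * (n : ℝ) - 10 / 3) * t
        + 3 * (n : ℝ) ^ 2 - (13 / 3) * n - 8 ≤ degRes G ∧
    (degRes G = -(4 / 3) * (t : ℝ) ^ 2 + ((4 / 3) * (n : ℝ) - 10 / 3) * t
        + 3 * (n : ℝ) ^ 2 - (13 / 3) * n - 8 ↔ Nonempty (G ≃g G4g n t)) :=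
  stmt_19_general n t (by omega) ht G hG hnot0 hnot5
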